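/- arXiv:2212.01017 — 3 statements merged into one kernel-verified Lean document; each statement's English description precedes it below -/
import Mathlib

section
/- Let n ≥ 1 and 1 ≤ γ ≤ ⌊n/2⌋, and let G be a minimizer graph of 𝔾_{n,γ}, i.e., a connected simple graph on n vertices with domination number γ whose spectral radius is minimum among all such graphs. Then G is a tree. -/
open SimpleGraph

/-- Adjacency matrix of a simple graph over ℝ. -/
noncomputable def adjMat {V : Type*} (G : SimpleGraph V) : Matrix V V ℝ :=
  Matrix.of fun i j => @ite ℝ (G.Adj i j) (Classical.propDecidable _) 1 0

/-- Spectral radius: the largest eigenvalue (supremum of the real spectrum)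
of the adjacency matrix. -/
noncomputable def specRad {V : Type*} [Fintype V] [DecidableEq V]
    (G : SimpleGraph V) : ℝ :=
  sSup (spectrum ℝ (adjMat G))

/-- `D` is a dominating set of `G`. -/
def IsDomSet {V : Type*} (G : SimpleGraph V) (D : Finset V) : Prop :=
  ∀ v ∉ D, ∃ u ∈ D, G.Adj u v

/-- The domination number of `G`. -/
noncomputable def domNum {V : Type*} [Fintype V] (G : SimpleGraph V) : ℕ :=
  sInf {k | ∃ D : Finset V, IsDomSet G D ∧ D.card = k}

theorem adjMat_isHermitian {V : Type*} (G : SimpleGraph V) : (adjMat G).IsHermitian := by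
  ext i j
  by_cases h : G.Adj i j
  · simp [adjMat, Matrix.conjTranspose_apply, h, h.symm]
  · have h' : ¬ G.Adj j i := fun e => h e.symm
    simp [adjMat, Matrix.conjTranspose_apply, h, h']

theorem specRad_sub_posSemidef {V : Type*} [Fintype V] [DecidableEq V] (G : SimpleGraph V) :
    (algebraMap ℝ (Matrix V V ℝ) (specRad G) - adjMat G).PosSemidef := by
  rw [Matrix.posSemidef_iff_isHermitian_and_spectrum_nonneg]
  refine ⟨?_, ?_⟩
  · apply Matrix.IsHermitian.sub _ (adjMat_isHermitian G)
    rw [Matrix.algebraMap_eq_diagonal]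
    exact Matrix.isHermitian_diagonal _
  · rw [← spectrum.singleton_sub_eq]
    rintro x ⟨a, ha, b, hb, rfl⟩
    rw [Set.mem_singleton_iff] at ha
    subst ha
    have : b ≤ specRad G := le_csSup (Matrix.finite_real_spectrum).bddAbove hb
    simpa using this

theorem quad_eq {V : Type*} [Fintype V] [DecidableEq V] (G : SimpleGraph V) (r : ℝ) (x : V → ℝ) :
    x ⬝ᵥ ((algebraMap ℝ (Matrix V V ℝ) r - adjMat G).mulVec x) =
      r * (∑ i, x i * x i) - ∑ i, ∑ j, adjMat G i j * (x i * x j) := by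
  rw [Matrix.sub_mulVec, dotProduct_sub, Algebra.algebraMap_eq_smul_one, Matrix.smul_mulVec,
    Matrix.one_mulVec, dotProduct_smul]
  simp only [dotProduct, Matrix.mulVec, smul_eq_mul, Finset.mul_sum]
  congr 1
  refine Finset.sum_congr rfl fun i _ => Finset.sum_congr rfl fun j _ => by ring

theorem adjMat_nonneg {V : Type*} (G : SimpleGraph V) (i j : V) : 0 ≤ adjMat G i j := by
  simp only [adjMat, Matrix.of_apply]
  split_ifs <;> norm_num

theorem exists_perron {V : Type*} [Fintype V] [DecidableEq V] (G : SimpleGraph V)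
    (hG : G.Connected) : ∃ y : V → ℝ, (∀ i, 0 < y i) ∧
      specRad G * (∑ i, y i * y i) = ∑ i, ∑ j, adjMat G i j * (y i * y j) := by
  have := hG.nonempty
  have hmem : specRad G ∈ spectrum ℝ (adjMat G) := by
    apply Set.Nonempty.csSup_mem _ Matrix.finite_real_spectrum
    rw [(adjMat_isHermitian G).spectrum_real_eq_range_eigenvalues]
    exact Set.range_nonempty _
  have hP := specRad_sub_posSemidef G
  obtain ⟨x, hx0, hx⟩ : ∃ x : V → ℝ, x ≠ 0 ∧
      (algebraMap ℝ (Matrix V V ℝ) (specRad G) - adjMat G).mulVec x = 0 := by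
    rw [Matrix.exists_mulVec_eq_zero_iff]
    by_contra h
    exact hmem ((Matrix.isUnit_iff_isUnit_det _).2 (isUnit_iff_ne_zero.2 h))
  have hxq := quad_eq G (specRad G) x
  rw [hx, dotProduct_zero] at hxq
  let y : V → ℝ := fun i => |x i|
  have hyn : ∀ i, 0 ≤ y i := fun i => abs_nonneg _
  have hyq := quad_eq G (specRad G) y
  have hy0 : y ⬝ᵥ ((algebraMap ℝ (Matrix V V ℝ) (specRad G) - adjMat G).mulVec y) = 0 := by
    apply le_antisymm
    · rw [hyq, hxq]
      have h1 : ∑ i, y i * y i = ∑ i, x i * x i := by simp [y]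
      rw [h1]
      apply sub_le_sub_left
      refine Finset.sum_le_sum fun i _ => Finset.sum_le_sum fun j _ => ?_
      apply mul_le_mul_of_nonneg_left _ (adjMat_nonneg G i j)
      simp only [y]
      rw [← abs_mul]
      exact le_abs_self _
    · simpa using hP.dotProduct_mulVec_nonneg y
  have hyv : (algebraMap ℝ (Matrix V V ℝ) (specRad G) - adjMat G).mulVec y = 0 := by
    rw [← hP.dotProduct_mulVec_zero_iff]
    simpa using hy0
  have hyi : ∀ i, specRad G * y i = ∑ j, adjMat G i j * y j := by
    intro i
    have := congrFun hyv i
    rw [Matrix.sub_mulVec, Algebra.algebraMap_eq_smul_one, Matrix.smul_mulVec,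
      Matrix.one_mulVec] at this
    simp only [Pi.sub_apply, Pi.smul_apply, smul_eq_mul, Pi.zero_apply, Matrix.mulVec,
      dotProduct] at this
    linarith
  have hstep : ∀ i j, G.Adj i j → y i = 0 → y j = 0 := by
    intro i j hij hi
    have h := hyi i
    rw [hi, mul_zero, eq_comm, Finset.sum_eq_zero_iff_of_nonneg
      (fun j _ => mul_nonneg (adjMat_nonneg G i j) (hyn j))] at h
    simpa [adjMat, hij] using h j (Finset.mem_univ _)
  have hwalk : ∀ i j, G.Walk i j → y i = 0 → y j = 0 := by
    intro i j w
    induction w with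
    | nil => exact id
    | cons h _ ih => exact fun hi => ih (hstep _ _ h hi)
  refine ⟨y, fun i => lt_of_le_of_ne (hyn i) fun hi => hx0 ?_, ?_⟩
  · funext j
    obtain ⟨w⟩ := hG.preconnected i j
    simpa [y] using hwalk i j w hi.symm
  · linarith

theorem specRad_lt {V : Type*} [Fintype V] [DecidableEq V] (H G : SimpleGraph V)
    (hH : H.Connected) (hlt : H < G) : specRad H < specRad G := by
  obtain ⟨y, hy, hq⟩ := exists_perron H hH
  have := hH.nonempty
  obtain ⟨u, v, huv, hn⟩ : ∃ u v, G.Adj u v ∧ ¬ H.Adj u v := by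
    by_contra! h
    exact hlt.not_ge fun u v => h u v
  have hG := (specRad_sub_posSemidef G).dotProduct_mulVec_nonneg y
  rw [star_trivial, quad_eq] at hG
  have hle : ∀ i j, adjMat H i j * (y i * y j) ≤ adjMat G i j * (y i * y j) := by
    intro i j
    apply mul_le_mul_of_nonneg_right _ (mul_pos (hy i) (hy j)).le
    by_cases h : H.Adj i j
    · simp [adjMat, h, hlt.le h]
    · simpa [adjMat, h] using adjMat_nonneg G i j
  have hs : ∑ i, ∑ j, adjMat H i j * (y i * y j) < ∑ i, ∑ j, adjMat G i j * (y i * y j) := by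
    refine Finset.sum_lt_sum (fun i _ => Finset.sum_le_sum fun j _ => hle i j)
      ⟨u, Finset.mem_univ _, Finset.sum_lt_sum (fun j _ => hle u j) ⟨v, Finset.mem_univ _, ?_⟩⟩
    simpa [adjMat, huv, hn] using mul_pos (hy u) (hy v)
  have hpos : 0 < ∑ i, y i * y i :=
    Finset.sum_pos (fun i _ => mul_pos (hy i) (hy i)) Finset.univ_nonempty
  exact lt_of_mul_lt_mul_right (by linarith) hpos.le

/-- The star forest attached to a choice function `f` with values in `D`. -/
def starForest {V : Type*} (D : Finset V) (f : V → V) (hf : ∀ v ∉ D, f v ∈ D) :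
    SimpleGraph V where
  Adj u v := (u ∉ D ∧ v = f u) ∨ (v ∉ D ∧ u = f v)
  symm := ⟨fun _ _ h => h.symm⟩
  loopless := ⟨fun u h => by
    rcases h with ⟨h, e⟩ | ⟨h, e⟩ <;> exact h (e ▸ hf u h)⟩

theorem starForest_acyclic {V : Type*} (D : Finset V) (f : V → V) (hf : ∀ v ∉ D, f v ∈ D) :
    (starForest D f hf).IsAcyclic := by
  have key : ∀ u v, u ∉ D → v = f u →
      ¬ ((starForest D f hf).deleteEdges {s(u, v)}).Reachable u v := by
    rintro u v hu hv ⟨w⟩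
    cases w with
    | nil => exact hu (hv ▸ hf u hu)
    | cons h _ =>
      rw [deleteEdges_adj] at h
      obtain ⟨h1, h2⟩ := h
      rcases h1 with ⟨_, e⟩ | ⟨hw, e⟩
      · exact h2 (by rw [e, hv]; rfl)
      · exact hu (e ▸ hf _ hw)
  rw [isAcyclic_iff_forall_adj_isBridge]
  intro u v h
  rw [isBridge_iff]
  rcases h with ⟨hu, hv⟩ | ⟨hv, hu⟩
  · have := key u v hu hv
    simp_all
  · have := key v u hv hu
    rw [reachable_comm, Sym2.eq_swap] at this
    simp_all

theorem domNum_le {V : Type*} [Fintype V] (G : SimpleGraph V) (D : Finset V)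
    (hD : IsDomSet G D) : domNum G ≤ D.card := Nat.sInf_le ⟨D, hD, rfl⟩

theorem exists_domNum {V : Type*} [Fintype V] (G : SimpleGraph V) :
    ∃ D : Finset V, IsDomSet G D ∧ D.card = domNum G :=
  Nat.sInf_mem (s := {k | ∃ D : Finset V, IsDomSet G D ∧ D.card = k})
    ⟨_, Finset.univ, fun v hv => absurd (Finset.mem_univ v) hv, rfl⟩

theorem exists_tree {V : Type*} [Fintype V] (G : SimpleGraph V) (hG : G.Connected) :
    ∃ T ≤ G, T.IsTree ∧ domNum T = domNum G := by
  classical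
  obtain ⟨D, hD, hc⟩ := exists_domNum G
  have hD' : ∀ v, ∃ u, v ∉ D → u ∈ D ∧ G.Adj u v := by
    intro v
    by_cases hv : v ∈ D
    · exact ⟨v, fun h => absurd hv h⟩
    · obtain ⟨u, hu⟩ := hD v hv
      exact ⟨u, fun _ => hu⟩
  choose f hf using hD'
  have hFG : starForest D f (fun v hv => (hf v hv).1) ≤ G := by
    rintro u v (⟨hu, rfl⟩ | ⟨hv, rfl⟩)
    · exact (hf u hu).2.symm
    · exact (hf v hv).2
  obtain ⟨T, hFT, hTG, hT⟩ := hG.exists_isTree_le_of_le_of_isAcyclic hFG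
    (starForest_acyclic D f _)
  refine ⟨T, hTG, hT, le_antisymm ?_ ?_⟩
  · rw [← hc]
    exact domNum_le T D fun v hv => ⟨f v, (hf v hv).1, by
      have : (starForest D f (fun v hv => (hf v hv).1)).Adj (f v) v := Or.inr ⟨hv, rfl⟩
      exact hFT this⟩
  · obtain ⟨E, hE, hEc⟩ := exists_domNum T
    rw [← hEc]
    refine domNum_le G E fun v hv => ?_
    obtain ⟨u, hu, h⟩ := hE v hv
    exact ⟨u, hu, hTG h⟩

theorem minimizer_is_tree (n γ : ℕ) (hn : 1 ≤ n) (hγ1 : 1 ≤ γ) (hγ2 : γ ≤ n / 2)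
    (G : SimpleGraph (Fin n)) (hconn : G.Connected) (hdom : domNum G = γ)
    (hmin : ∀ H : SimpleGraph (Fin n), H.Connected → domNum H = γ →
      specRad G ≤ specRad H) :
    G.IsTree := by
  obtain ⟨T, hle, hT, hd⟩ := exists_tree G hconn
  rcases hle.eq_or_lt with rfl | hlt
  · exact hT
  · exact absurd (hmin T hT.1 (hd.trans hdom)) (not_le.2 (specRad_lt T G hT.1 hlt))
end

section
/- Let n and γ be integers with 2 ≤ γ < ⌈n/3⌉, and let G be a minimizer graph of 𝔾_{n,γ}. Then there exists a minimum dominating set D of G such that the minimum of d_G(u,v) over all pairs of distinct vertices u, v ∈ D equals 3, where d_G denotes graph distance. -/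
open SimpleGraph

section helpers

set_option linter.unusedSectionVars false

variable {V : Type*} [Fintype V] [DecidableEq V]

/-- Neighbours as a finset (classically). -/
noncomputable def nb (G : SimpleGraph V) (v : V) : Finset V :=
  @Finset.filter _ (G.Adj v) (Classical.decPred _) Finset.univ

theorem mem_nb {G : SimpleGraph V} {v u : V} : u ∈ nb G v ↔ G.Adj v u := by
  simp [nb]

/-- Sum of `x` over the neighbours of `v`. -/
noncomputable def sm (G : SimpleGraph V) (x : V → ℝ) (v : V) : ℝ := ∑ u ∈ nb G v, x u

theorem adjMat_mulVec (G : SimpleGraph V) (x : V → ℝ) (v : V) :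
    (adjMat G).mulVec x v = sm G x v := by
  classical
  simp only [Matrix.mulVec, dotProduct, adjMat, Matrix.of_apply, sm, nb, ite_mul, one_mul,
    zero_mul, Finset.sum_filter]

theorem adjMat_herm (G : SimpleGraph V) : (adjMat G).IsHermitian := by
  ext i j
  by_cases h : G.Adj i j
  · have h' := h.symm
    simp [adjMat, h, h']
  · have h' : ¬ G.Adj j i := fun h' => h h'.symm
    simp [adjMat, h, h']

theorem adjMat_psd [Nonempty V] (G : SimpleGraph V) :
    (algebraMap ℝ (Matrix V V ℝ) (specRad G) - adjMat G).PosSemidef := by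
  rw [Matrix.posSemidef_iff_isHermitian_and_spectrum_nonneg]
  constructor
  · refine Matrix.IsHermitian.sub ?_ (adjMat_herm G)
    rw [Matrix.algebraMap_eq_diagonal]
    exact Matrix.isHermitian_diagonal _
  · rw [← spectrum.singleton_sub_eq]
    rintro t ht
    rw [Set.singleton_sub] at ht
    obtain ⟨y, hy, rfl⟩ := ht
    have hb : BddAbove (spectrum ℝ (adjMat G)) := by
      rw [(adjMat_herm G).spectrum_real_eq_range_eigenvalues]
      exact (Set.finite_range _).bddAbove
    have := le_csSup hb hy
    simpa [specRad] using this

theorem psd_mulVec [Nonempty V] (G : SimpleGraph V) (f : V → ℝ) (v : V) :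
    (algebraMap ℝ (Matrix V V ℝ) (specRad G) - adjMat G).mulVec f v
      = specRad G * f v - sm G f v := by
  rw [Matrix.sub_mulVec, Pi.sub_apply, adjMat_mulVec, Matrix.algebraMap_eq_diagonal]
  simp [Matrix.mulVec_diagonal]

theorem rayleigh [Nonempty V] (G : SimpleGraph V) (f : V → ℝ) :
    ∑ v, f v * sm G f v ≤ specRad G * ∑ v, f v ^ 2 := by
  have h := (adjMat_psd G).dotProduct_mulVec_nonneg f
  simp only [dotProduct, psd_mulVec, Pi.star_apply, star_trivial, mul_sub,
    Finset.sum_sub_distrib] at h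
  rw [Finset.mul_sum]
  have : ∑ i, specRad G * f i ^ 2 = ∑ x, f x * (specRad G * f x) :=
    Finset.sum_congr rfl fun i _ => by ring
  linarith

theorem exists_top_eigvec [Nonempty V] (G : SimpleGraph V) :
    ∃ z : V → ℝ, z ≠ 0 ∧ ∀ v, sm G z v = specRad G * z v := by
  have hA := adjMat_herm G
  have hs := hA.spectrum_real_eq_range_eigenvalues
  have hmem : specRad G ∈ spectrum ℝ (adjMat G) := by
    unfold specRad
    rw [hs]
    exact (Set.range_nonempty _).csSup_mem (Set.finite_range _)
  rw [hs] at hmem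
  obtain ⟨i, hi⟩ := hmem
  refine ⟨(hA.eigenvectorBasis i).ofLp, ?_, fun v => ?_⟩
  · intro h
    have h1 : hA.eigenvectorBasis i = 0 := by
      ext j; simpa using congrFun h j
    have := hA.eigenvectorBasis.orthonormal.ne_zero i
    exact this h1
  · have := congrFun (hA.mulVec_eigenvectorBasis i) v
    rw [adjMat_mulVec, hi] at this
    simpa using this

theorem perron [Nonempty V] (G : SimpleGraph V) (hG : G.Connected) :
    ∃ x : V → ℝ, (∀ v, 0 < x v) ∧ ∀ v, sm G x v = specRad G * x v := by
  obtain ⟨z, hz0, hz⟩ := exists_top_eigvec G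
  let x : V → ℝ := fun v => |z v|
  have h1 : ∑ v, x v * sm G x v ≥ specRad G * ∑ v, x v ^ 2 := by
    rw [Finset.mul_sum]
    refine Finset.sum_le_sum fun v _ => ?_
    have : specRad G * x v ^ 2 = z v * sm G z v := by
      rw [hz]; simp only [x, sq_abs]; ring
    rw [this]
    simp only [sm, Finset.mul_sum]
    refine Finset.sum_le_sum fun u _ => ?_
    simp only [x]
    rw [← abs_mul]
    exact le_abs_self _
  have h2 := rayleigh G x
  have h3 : (algebraMap ℝ (Matrix V V ℝ) (specRad G) - adjMat G).mulVec x = 0 := by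
    rw [← (adjMat_psd G).dotProduct_mulVec_zero_iff]
    simp only [dotProduct, psd_mulVec, Pi.star_apply, star_trivial, mul_sub,
      Finset.sum_sub_distrib]
    have : ∑ i, specRad G * x i ^ 2 = ∑ v, x v * (specRad G * x v) :=
      Finset.sum_congr rfl fun i _ => by ring
    rw [Finset.mul_sum] at h1 h2
    linarith
  have h4 : ∀ v, sm G x v = specRad G * x v := by
    intro v
    have := congrFun h3 v
    rw [psd_mulVec] at this
    simp at this
    linarith
  have hx0 : ∀ v, 0 ≤ x v := fun v => abs_nonneg _
  refine ⟨x, ?_, h4⟩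
  by_contra hcon
  push Not at hcon
  obtain ⟨v, hv⟩ := hcon
  have hv0 : x v = 0 := le_antisymm hv (hx0 v)
  have step : ∀ a b, G.Adj a b → x a = 0 → x b = 0 := by
    intro a b hab ha
    have := h4 a
    rw [ha, mul_zero, sm, Finset.sum_eq_zero_iff_of_nonneg (fun i _ => hx0 i)] at this
    exact this b (mem_nb.2 hab)
  apply hz0
  funext w
  obtain ⟨p⟩ := hG.preconnected v w
  have : x w = 0 := by
    induction p with
    | nil => exact hv0
    | cons h p ih => exact ih (step _ _ h hv0 |>.le) (step _ _ h hv0)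
  simpa [x] using this

theorem sum_sm_comm (G : SimpleGraph V) (x y : V → ℝ) :
    ∑ v, x v * sm G y v = ∑ v, y v * sm G x v := by
  classical
  simp only [sm, Finset.mul_sum, nb, Finset.sum_filter]
  rw [Finset.sum_comm]
  refine Finset.sum_congr rfl fun u _ => Finset.sum_congr rfl fun v _ => ?_
  by_cases h : G.Adj v u
  · have h' := h.symm
    simp only [h, h', if_true]
    ring
  · have h' : ¬ G.Adj u v := fun h' => h h'.symm
    simp [h, h']

/-- Strict supersolution criterion. -/
theorem specRad_lt_of_super (H : SimpleGraph V) (hH : H.Connected) (ρ : ℝ) (y : V → ℝ)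
    (hy : ∀ v, 0 < y v) (hle : ∀ v, sm H y v ≤ ρ * y v) (s : V) (hs : sm H y s < ρ * y s) :
    specRad H < ρ := by
  have : Nonempty V := ⟨s⟩
  obtain ⟨x, hx, hxe⟩ := perron H hH
  have h1 : ∑ v, x v * sm H y v < ∑ v, x v * (ρ * y v) :=
    Finset.sum_lt_sum (fun v _ => mul_le_mul_of_nonneg_left (hle v) (hx v).le)
      ⟨s, Finset.mem_univ _, mul_lt_mul_of_pos_left hs (hx s)⟩
  rw [sum_sm_comm] at h1
  simp only [hxe] at h1
  have e1 : ∑ v, y v * (specRad H * x v) = specRad H * ∑ v, x v * y v := by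
    rw [Finset.mul_sum]; exact Finset.sum_congr rfl fun i _ => by ring
  have e2 : ∑ v, x v * (ρ * y v) = ρ * ∑ v, x v * y v := by
    rw [Finset.mul_sum]; exact Finset.sum_congr rfl fun i _ => by ring
  rw [e1, e2] at h1
  have : 0 < ∑ v, x v * y v := Finset.sum_pos (fun v _ => mul_pos (hx v) (hy v)) ⟨s, Finset.mem_univ _⟩
  exact lt_of_mul_lt_mul_right h1 this.le

/-- `Tail G w u`: the edge `w u` starts a pendant path `w - u - ...`. -/
inductive Tail (G : SimpleGraph V) : V → V → Prop
  | leaf {w u : V} : G.Adj w u → (∀ y, G.Adj u y → y = w) → Tail G w u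
  | step {w u u2 : V} : G.Adj w u → G.Adj u u2 → w ≠ u2 →
      (∀ y, G.Adj u y → y = w ∨ y = u2) → Tail G u u2 → Tail G w u

theorem sm_ge_one {G : SimpleGraph V} {x : V → ℝ} (hx : ∀ v, 0 < x v) {v a : V}
    (ha : G.Adj v a) : x a ≤ sm G x v :=
  Finset.single_le_sum (f := x) (fun i _ => (hx i).le) (mem_nb.2 ha)

theorem sm_ge_three {G : SimpleGraph V} {x : V → ℝ} (hx : ∀ v, 0 < x v) {v a b c : V}
    (ha : G.Adj v a) (hb : G.Adj v b) (hc : G.Adj v c) (hab : a ≠ b) (hac : a ≠ c) (hbc : b ≠ c) :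
    x a + x b + x c ≤ sm G x v := by
  have h : ({a, b, c} : Finset V) ⊆ nb G v := by
    intro u hu
    simp only [Finset.mem_insert, Finset.mem_singleton] at hu
    rw [mem_nb]
    rcases hu with rfl | rfl | rfl <;> assumption
  have := Finset.sum_le_sum_of_subset_of_nonneg (f := x) h (fun i _ _ => (hx i).le)
  rw [Finset.sum_insert (by simp [hab, hac]), Finset.sum_insert (by simp [hbc]),
    Finset.sum_singleton] at this
  unfold sm
  linarith

theorem sm_eq_two {G : SimpleGraph V} {x : V → ℝ} {v a b : V}
    (ha : G.Adj v a) (hb : G.Adj v b) (hab : a ≠ b) (h : ∀ y, G.Adj v y → y = a ∨ y = b) :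
    sm G x v = x a + x b := by
  have : nb G v = {a, b} := by
    ext u
    rw [mem_nb]
    simp only [Finset.mem_insert, Finset.mem_singleton]
    refine ⟨h u, ?_⟩
    rintro (rfl | rfl) <;> assumption
  rw [sm, this, Finset.sum_pair hab]

theorem quad_aux {p ρ : ℝ} (hp : 1 ≤ p) (hρ : 0 < ρ) (h : p + 2 / ρ ≤ ρ) : p + 1 / p ≤ ρ := by
  have hp0 : 0 < p := by linarith
  have h1 : p * ρ + 2 ≤ ρ ^ 2 := by
    have := mul_le_mul_of_nonneg_right h hρ.le
    rw [add_mul, div_mul_cancel₀ _ hρ.ne'] at this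
    nlinarith
  have hρ2 : 2 ≤ ρ := by nlinarith
  have key : p ^ 2 + 1 ≤ ρ * p := by
    by_cases hc : 2 * p ≤ ρ
    · nlinarith
    · push Not at hc
      nlinarith
  rw [← sub_nonneg]
  have : ρ - (p + 1 / p) = (ρ * p - (p ^ 2 + 1)) / p := by field_simp
  rw [this]
  exact div_nonneg (by linarith) hp0.le

/-- Hoffman-Smith type estimate. -/
theorem hs_est (G : SimpleGraph V) (x : V → ℝ) (ρ : ℝ) (hx : ∀ v, 0 < x v)
    (he : ∀ v, sm G x v = ρ * x v) (u w : V) (huw : G.Adj u w) (ht : ¬ Tail G w u)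
    (hle : x u ≤ x w) : x w / x u + x u / x w ≤ ρ := by
  classical
  by_contra hcon
  let S : Finset (V × V) := Finset.univ.filter fun q =>
    G.Adj q.1 q.2 ∧ ¬ Tail G q.2 q.1 ∧ x q.1 ≤ x q.2 ∧ ¬ (x q.2 / x q.1 + x q.1 / x q.2 ≤ ρ)
  have hS : S.Nonempty := ⟨(u, w), by simp only [S, Finset.mem_filter]; exact ⟨Finset.mem_univ _, huw, ht, hle, hcon⟩⟩
  obtain ⟨⟨u, w⟩, hmem, hmax⟩ := S.exists_max_image (fun q => x q.2 / x q.1) hS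
  simp only [S, Finset.mem_filter, Finset.mem_univ, true_and] at hmem hmax
  clear huw ht hle hcon hS
  obtain ⟨huw, ht, hle, hcon⟩ := hmem
  push Not at hcon
  have hxu := hx u
  have hxw := hx w
  have hρ : 0 < ρ := by
    have h1 := sm_ge_one hx huw
    rw [he] at h1
    by_contra h
    push Not at h
    nlinarith
  by_cases h1 : ∀ y, G.Adj u y → y = w
  · exact ht (Tail.leaf huw.symm h1)
  push Not at h1
  obtain ⟨u2, hu2, hne⟩ := h1
  have hx2 := hx u2
  by_cases h2 : ∀ y, G.Adj u y → y = w ∨ y = u2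
  · have ht2 : ¬ Tail G u u2 := fun h => ht (Tail.step huw.symm hu2 hne.symm h2 h)
    have e := sm_eq_two (x := x) huw hu2 hne.symm h2
    rw [he] at e
    have hρe : ρ = x w / x u + x u2 / x u := by
      field_simp; linarith
    have hs : x u2 / x u < x u / x w := by linarith
    have hs' : x u2 * x w < x u * x u := by
      rw [div_lt_div_iff₀ hxu hxw] at hs; exact hs
    have hp : x w / x u < x u / x u2 := by
      rw [div_lt_div_iff₀ hxu hx2]; linarith
    have hle2 : x u2 ≤ x u := by nlinarith
    have := hmax (u2, u) ⟨hu2.symm, ht2, hle2, by push Not; linarith⟩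
    simp only at this
    linarith
  · push Not at h2
    obtain ⟨u3, hu3, hn3, hn4⟩ := h2
    have e := sm_ge_three hx huw hu2 hu3 hne.symm hn3.symm hn4.symm
    have e2 := sm_ge_one hx hu2.symm
    have e3 := sm_ge_one hx hu3.symm
    rw [he] at e e2 e3
    have hx3 := hx u3
    have : x w / x u + 2 / ρ ≤ ρ := by
      rw [div_add_div _ _ hxu.ne' hρ.ne', div_le_iff₀ (by positivity)]
      nlinarith
    have q := quad_aux ((one_le_div hxu).2 hle) hρ this
    rw [one_div_div] at q
    linarith

/-- Move the pendant vertex `z` (neighbour `s`) into the middle of the edge `a b`. -/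
def op (G : SimpleGraph V) (a b z s : V) : SimpleGraph V :=
  (G.deleteEdges {s(a, b), s(z, s)}) ⊔ edge a z ⊔ edge z b

theorem op_adj {G : SimpleGraph V} {a b z s : V} (ha : z ≠ a) (hb : z ≠ b) {v v' : V} :
    (op G a b z s).Adj v v' ↔
      (G.Adj v v' ∧ ¬ (v = a ∧ v' = b) ∧ ¬ (v = b ∧ v' = a) ∧ ¬ (v = z ∧ v' = s) ∧
        ¬ (v = s ∧ v' = z)) ∨ (v = a ∧ v' = z) ∨ (v = z ∧ v' = a) ∨ (v = z ∧ v' = b) ∨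
        (v = b ∧ v' = z) := by
  simp only [op, SimpleGraph.sup_adj, SimpleGraph.deleteEdges_adj, SimpleGraph.edge_adj,
    Set.mem_insert_iff, Set.mem_singleton_iff, Sym2.eq_iff]
  grind

/-- Supersolution with a marked cut edge. -/
structure St (G : SimpleGraph V) (S : Set V) (a b : V) (y : V → ℝ) (ρ p : ℝ) : Prop where
  conn : G.Connected
  pos : ∀ v, 0 < y v
  sup : ∀ v, sm G y v ≤ ρ * y v
  ha : a ∈ S
  hb : b ∉ S
  adj : G.Adj a b
  cut : ∀ v ∈ S, ∀ v' ∉ S, G.Adj v v' → v = a ∧ v' = b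
  ratio : y b = p * y a
  hp : 0 < p
  hρ : p + 1 / p ≤ ρ

theorem op_conn {G : SimpleGraph V} (hG : G.Connected) {a b z s : V} (hza : z ≠ a) (hzb : z ≠ b)
    (hzs : G.Adj z s) (hz : ∀ y, G.Adj z y → y = s) : (op G a b z s).Connected := by
  set H := op G a b z s with hH
  have haz : H.Adj a z := by rw [hH, op_adj hza hzb]; simp
  have hzb' : H.Adj z b := by rw [hH, op_adj hza hzb]; simp
  have step : ∀ v v', G.Adj v v' → v ≠ z → v' ≠ z → H.Reachable v v' := by
    intro v v' h h1 h2
    by_cases c1 : v = a ∧ v' = b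
    · rw [c1.1, c1.2]; exact haz.reachable.trans hzb'.reachable
    by_cases c2 : v = b ∧ v' = a
    · rw [c2.1, c2.2]; exact (haz.reachable.trans hzb'.reachable).symm
    apply SimpleGraph.Adj.reachable
    rw [hH, op_adj hza hzb]
    left
    exact ⟨h, c1, c2, fun h => h1 h.1, fun h => h2 h.2⟩
  have main : ∀ u v (_ : G.Walk u v), H.Reachable a u → (u = z → H.Reachable a s) →
      H.Reachable a v := by
    intro u v w
    induction w with
    | nil => intro h _; exact h
    | @cons u v w h p ih =>
      intro h1 h2
      by_cases cu : u = z
      · subst cu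
        have := hz _ h
        subst this
        exact ih (h2 rfl) (fun _ => h2 rfl)
      by_cases cv : v = z
      · subst cv
        have := hz _ h.symm
        subst this
        exact ih haz.reachable (fun _ => h1)
      · exact ih (h1.trans (step _ _ h cu cv)) (fun h => absurd h cv)
  have : Nonempty V := ⟨a⟩
  refine SimpleGraph.Connected.mk ?_
  have r : ∀ v, H.Reachable a v := fun v =>
    main a v (hG.preconnected a v).some (SimpleGraph.Reachable.refl _) (fun h => absurd h.symm hza)
  exact fun u v => (r u).symm.trans (r v)

theorem op_step {G : SimpleGraph V} {S : Set V} {a b : V} {y : V → ℝ} {ρ p : ℝ}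
    (h : St G S a b y ρ p) {z s : V} (hza : z ≠ a) (hzb : z ≠ b) (hzs : G.Adj z s)
    (hz : ∀ y, G.Adj z y → y = s) :
    ∃ y', St (op G a b z s) (S \ {z}) a z y' ρ p ∧
      sm (op G a b z s) y' s < ρ * y' s := by
  classical
  let y' : V → ℝ := fun v => if v = z then p * y a else if v ∈ S then y v else p * y v
  let c : V → ℝ := fun v => if v ∈ S then 1 else p
  have hp := h.hp
  have hc : ∀ v, 0 < c v := by intro v; simp only [c]; split_ifs <;> linarith
  have hyc : ∀ v, v ≠ z → y' v = c v * y v := by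
    intro v hv; simp only [y', c, if_neg hv]; split_ifs <;> ring
  have hyz : y' z = p * y a := by simp [y']
  have hca : c a = 1 := by simp [c, h.ha]
  have hcb : c b = p := by simp [c, h.hb]
  have hcz : ∀ v v', G.Adj v v' → ¬ (v = a ∧ v' = b) → ¬ (v = b ∧ v' = a) → c v = c v' := by
    intro v v' hv h1 h2
    simp only [c]
    by_cases i1 : v ∈ S <;> by_cases i2 : v' ∈ S
    · simp [i1, i2]
    · exact absurd (h.cut v i1 v' i2 hv) h1
    · exact absurd (h.cut v' i2 v i1 hv.symm).symm h2
    · simp [i1, i2]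
  have hab : a ≠ b := h.adj.ne
  have key : ∀ v, v ≠ z → sm (op G a b z s) y' v = c v * ∑ u ∈ (nb G v).erase z, y u := by
    intro v hv
    by_cases cva : v = a
    · subst cva
      have e : nb (op G v b z s) v = insert z (((nb G v).erase z).erase b) := by
        ext u
        simp only [mem_nb, op_adj hza hzb, Finset.mem_insert, Finset.mem_erase]
        grind
      rw [sm, e, Finset.sum_insert (by simp), hyz, ← h.ratio,
        ← Finset.add_sum_erase ((nb G v).erase z) y (a := b)
          (by simp [mem_nb, h.adj, hzb.symm]), hca, one_mul]
      congr 1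
      refine Finset.sum_congr rfl fun u hu => ?_
      simp only [Finset.mem_erase, mem_nb] at hu
      rw [hyc u hu.2.1, ← hcz v u hu.2.2 (fun h => hu.1 h.2) (fun h => hab h.1), hca, one_mul]
    by_cases cvb : v = b
    · subst cvb
      have e : nb (op G a v z s) v = insert z (((nb G v).erase z).erase a) := by
        ext u
        simp only [mem_nb, op_adj hza hzb, Finset.mem_insert, Finset.mem_erase]
        grind
      rw [sm, e, Finset.sum_insert (by simp), hyz,
        ← Finset.add_sum_erase ((nb G v).erase z) y (a := a)
          (by simp [mem_nb, h.adj.symm, hza.symm]), hcb, mul_add, Finset.mul_sum]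
      congr 1
      refine Finset.sum_congr rfl fun u hu => ?_
      simp only [Finset.mem_erase, mem_nb] at hu
      rw [hyc u hu.2.1, ← hcz v u hu.2.2 (fun h => hab h.1.symm) (fun h => hu.1 h.2), hcb]
    · have e : nb (op G a b z s) v = (nb G v).erase z := by
        ext u
        simp only [mem_nb, op_adj hza hzb, Finset.mem_erase]
        have := hz v
        have := G.adj_comm v z
        grind
      rw [sm, e, Finset.mul_sum]
      refine Finset.sum_congr rfl fun u hu => ?_
      simp only [Finset.mem_erase, mem_nb] at hu
      rw [hyc u hu.1, ← hcz v u hu.2 (fun h => cva h.1) (fun h => cvb h.1)]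
  have keyz : sm (op G a b z s) y' z = y' a + y' b := by
    refine sm_eq_two ?_ ?_ hab ?_
    · rw [op_adj hza hzb]; simp
    · rw [op_adj hza hzb]; simp
    · intro u hu
      rw [op_adj hza hzb] at hu
      have := hz u
      grind
  have hya := h.pos a
  have hsz : s ≠ z := hzs.ne.symm
  have hle : ∀ v, v ≠ z → ∑ u ∈ (nb G v).erase z, y u ≤ sm G y v := fun v _ =>
    Finset.sum_le_sum_of_subset_of_nonneg (Finset.erase_subset _ _) fun i _ _ => (h.pos i).le
  have hlt : ∑ u ∈ (nb G s).erase z, y u < sm G y s := by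
    rw [sm, ← Finset.add_sum_erase (nb G s) y (mem_nb.2 hzs.symm)]
    linarith [h.pos z]
  refine ⟨y', ⟨op_conn h.conn hza hzb hzs hz, ?_, ?_, ⟨h.ha, fun h => hza h.symm⟩, fun h => h.2 rfl, ?_,
    ?_, ?_, hp, h.hρ⟩, ?_⟩
  · intro v
    by_cases hv : v = z
    · rw [hv, hyz]; positivity
    · rw [hyc v hv]; exact mul_pos (hc v) (h.pos v)
  · intro v
    by_cases hv : v = z
    · rw [hv, keyz, hyz, hyc a hza.symm, hyc b hzb.symm, hca, hcb, h.ratio]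
      have := mul_le_mul_of_nonneg_right h.hρ (mul_pos hp hya).le
      have e : (p + 1 / p) * (p * y a) = p * (p * y a) + y a := by field_simp
      linarith
    · rw [key v hv, hyc v hv]
      have := mul_le_mul_of_nonneg_left ((hle v hv).trans (h.sup v)) (hc v).le
      linarith
  · rw [op_adj hza hzb]; simp
  · intro v hv v' hv' hadj
    rw [op_adj hza hzb] at hadj
    have c1 := h.cut v hv.1 v'
    have hbS := h.hb
    simp only [Set.mem_sdiff, Set.mem_singleton_iff] at hv hv'
    have c2 := hz v
    have c3 := G.adj_comm v z
    clear key hcz hyc hc keyz hle hlt hyz hca hcb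
    grind
  · rw [hyz, hyc a hza.symm, hca, one_mul]
  · rw [key s hsz, hyc s hsz]
    have := mul_lt_mul_of_pos_left (hlt.trans_le (h.sup s)) (hc s)
    linarith

/-- The relevant properties of a minimizer. -/
structure Mn (G : SimpleGraph V) (γ : ℕ) : Prop where
  conn : G.Connected
  card : 3 * γ + 1 ≤ Fintype.card V
  two : 2 ≤ γ
  min : ∀ (H : SimpleGraph V) (D : Finset V), H.Connected → IsDomSet H D → D.card ≤ γ →
    specRad G ≤ specRad H

theorem closed_univ {G : SimpleGraph V} (hG : G.Connected) {P : V → Prop} {a : V} (ha : P a)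
    (h : ∀ v w, P v → G.Adj v w → P w) (w : V) : P w := by
  obtain ⟨p⟩ := hG.preconnected a w
  induction p with
  | nil => exact ha
  | cons hadj p ih => exact ih (h _ _ ha hadj)

theorem del_lt {G : SimpleGraph V} (hG : G.Connected) {u v : V} (huv : G.Adj u v)
    (hd : (G.deleteEdges {s(u, v)}).Connected) :
    specRad (G.deleteEdges {s(u, v)}) < specRad G := by
  have : Nonempty V := ⟨u⟩
  obtain ⟨x, hx, he⟩ := perron G hG
  have hsub : ∀ w, nb (G.deleteEdges {s(u, v)}) w ⊆ nb G w := by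
    intro w t
    simp only [mem_nb, SimpleGraph.deleteEdges_adj]
    exact fun h => h.1
  refine specRad_lt_of_super _ hd _ x hx (fun w => ?_) u ?_
  · rw [← he w]
    exact Finset.sum_le_sum_of_subset_of_nonneg (hsub w) fun i _ _ => (hx i).le
  · rw [← he u]
    refine Finset.sum_lt_sum_of_subset (hsub u) (mem_nb.2 huv) ?_ (hx v) fun i _ _ => (hx i).le
    rw [mem_nb, SimpleGraph.deleteEdges_adj]
    simp

theorem nonbridge_dom {G : SimpleGraph V} {γ : ℕ} (h : Mn G γ) {D : Finset V} (hD : IsDomSet G D)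
    (hc : D.card ≤ γ) {u v : V} (huv : G.Adj u v) (hb : ¬ G.IsBridge s(u, v)) (hv : v ∉ D) :
    u ∈ D ∧ ∀ t ∈ D, G.Adj t v → t = u := by
  have hd := h.conn.connected_delete_edge_of_not_isBridge hb
  have hnd : ¬ IsDomSet (G.deleteEdges {s(u, v)}) D := fun hh =>
    absurd (h.min _ D hd hh hc) (not_le.2 (del_lt h.conn huv hd))
  simp only [IsDomSet] at hnd
  push Not at hnd
  obtain ⟨w, hw, hw'⟩ := hnd
  obtain ⟨d, hd1, hd2⟩ := hD w hw
  simp only [SimpleGraph.deleteEdges_adj, Set.mem_singleton_iff, Sym2.eq_iff] at hw'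
  have key := hw' d hd1
  by_cases h1 : d = u ∧ w = v
  · obtain ⟨rfl, rfl⟩ := h1
    refine ⟨hd1, fun t ht hta => ?_⟩
    have := hw' t ht
    have := hta.ne
    grind
  · grind

theorem nonbridge_dom' {G : SimpleGraph V} {γ : ℕ} (h : Mn G γ) {D : Finset V} (hD : IsDomSet G D)
    (hc : D.card ≤ γ) {u v : V} (huv : G.Adj u v) (hb : ¬ G.IsBridge s(u, v)) (hv : v ∈ D) :
    u ∉ D := by
  intro hu
  have hd := h.conn.connected_delete_edge_of_not_isBridge hb
  refine absurd (h.min _ D hd ?_ hc) (not_le.2 (del_lt h.conn huv hd))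
  intro w hw
  obtain ⟨d, hd1, hd2⟩ := hD w hw
  refine ⟨d, hd1, ?_⟩
  simp only [SimpleGraph.deleteEdges_adj, Set.mem_singleton_iff, Sym2.eq_iff]
  grind

theorem acyc {G : SimpleGraph V} {γ : ℕ} (h : Mn G γ) {D : Finset V} (hD : IsDomSet G D)
    (hc : D.card ≤ γ) : G.IsAcyclic := by
  have key : ∀ v ∉ D, ∀ c : G.Walk v v, ¬ c.IsCycle := by
    intro v hv c hcy
    have hn := hcy.not_nil
    have e1 : s(v, c.snd) ∈ c.edges := c.mk_start_snd_mem_edges hn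
    have e2 : s(c.penultimate, v) ∈ c.edges := c.mk_penultimate_end_mem_edges hn
    have b1 : ¬ G.IsBridge s(c.snd, v) := fun hb =>
      hb.notMem_edges_of_isCycle hcy (by rw [Sym2.eq_swap]; exact e1)
    have b2 : ¬ G.IsBridge s(c.penultimate, v) := fun hb => hb.notMem_edges_of_isCycle hcy e2
    have r1 := nonbridge_dom h hD hc (c.adj_snd hn).symm b1 hv
    have r2 := nonbridge_dom h hD hc (c.adj_penultimate hn) b2 hv
    exact hcy.snd_ne_penultimate (r2.2 _ r1.1 (c.adj_snd hn).symm)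
  intro v c hcy
  by_cases hv : v ∈ D
  · have hn := hcy.not_nil
    have e1 : s(v, c.snd) ∈ c.edges := c.mk_start_snd_mem_edges hn
    have b1 : ¬ G.IsBridge s(c.snd, v) := fun hb =>
      hb.notMem_edges_of_isCycle hcy (by rw [Sym2.eq_swap]; exact e1)
    have r := nonbridge_dom' h hD hc (c.adj_snd hn).symm b1 hv
    exact key _ r (c.rotate _ (c.snd_mem_support_of_mem_edges e1)) (hcy.rotate _)
  · exact key v hv c hcy

/-- `z` is a pendant vertex attached to `s`. -/
def PendAt (G : SimpleGraph V) (z s : V) : Prop := G.Adj z s ∧ ∀ y, G.Adj z y → y = s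

theorem exists_pend {G : SimpleGraph V} (hG : G.Connected) (ha : G.IsAcyclic)
    (hc : 2 ≤ Fintype.card V) : ∃ z s, PendAt G z s := by
  classical
  have : Nontrivial V := Fintype.one_lt_card_iff_nontrivial.1 hc
  have ht : G.IsTree := ⟨hG, ha⟩
  obtain ⟨z, hz⟩ := ht.exists_vert_degree_one_of_nontrivial
  rw [SimpleGraph.degree_eq_one_iff_existsUnique_adj] at hz
  obtain ⟨s, h1, h2⟩ := hz
  exact ⟨z, s, h1, h2⟩

theorem pend_not_pend {G : SimpleGraph V} (hG : G.Connected) (hc : 3 ≤ Fintype.card V) {z t r : V}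
    (h1 : PendAt G z t) (h2 : PendAt G t r) : False := by
  have hr : z = r := h2.2 z h1.1.symm
  subst hr
  have := closed_univ hG (P := fun v => v = z ∨ v = t) (a := z) (Or.inl rfl) (by
    rintro v w (rfl | rfl) hw
    · right; exact h1.2 _ hw
    · left; exact h2.2 _ hw)
  have hsub : (Finset.univ : Finset V) ⊆ {z, t} := by
    intro v _
    simpa using this v
  have := Finset.card_le_card hsub
  have h2 : ({z, t} : Finset V).card ≤ 2 := Finset.card_le_two
  rw [Finset.card_univ] at this
  omega

theorem norm_dom {G : SimpleGraph V} (hG : G.Connected) (hc : 3 ≤ Fintype.card V) {D : Finset V}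
    (hD : IsDomSet G D) : ∃ D' : Finset V, IsDomSet G D' ∧ D'.card ≤ D.card ∧
      ∀ z s, PendAt G z s → z ∉ D' := by
  classical
  have hf : ∀ z, ∃ t, (PendAt G z t) ∨ ((∀ s, ¬ PendAt G z s) ∧ t = z) := by
    intro z
    by_cases h : ∃ t, PendAt G z t
    · obtain ⟨t, ht⟩ := h; exact ⟨t, Or.inl ht⟩
    · push Not at h; exact ⟨z, Or.inr ⟨h, rfl⟩⟩
  choose f hf using hf
  refine ⟨D.image f, ?_, Finset.card_image_le, ?_⟩
  · intro v hv
    by_cases hvD : v ∈ D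
    · rcases hf v with h | h
      · exact ⟨f v, Finset.mem_image_of_mem f hvD, h.1.symm⟩
      · exact absurd (by rw [← h.2]; exact Finset.mem_image_of_mem f hvD) hv
    · obtain ⟨u, hu, huv⟩ := hD v hvD
      have hm := Finset.mem_image_of_mem f hu
      rcases hf u with h | h
      · rw [← h.2 v huv] at hm; exact absurd hm hv
      · rw [h.2] at hm; exact ⟨u, hm, huv⟩
  · intro z s hz hm
    obtain ⟨u, hu, rfl⟩ := Finset.mem_image.1 hm
    rcases hf u with h | h
    · exact pend_not_pend hG hc h hz
    · rw [h.2] at hz; exact h.1 _ hz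

theorem exists_deg3 {G : SimpleGraph V} {D : Finset V} (hD : IsDomSet G D)
    (hc : 3 * D.card < Fintype.card V) : ∃ u ∈ D, 3 ≤ (nb G u).card := by
  by_contra hcon
  push Not at hcon
  have h1 : (Finset.univ : Finset V) ⊆ D.biUnion fun u => insert u (nb G u) := by
    intro v _
    rw [Finset.mem_biUnion]
    by_cases hv : v ∈ D
    · exact ⟨v, hv, Finset.mem_insert_self _ _⟩
    · obtain ⟨u, hu, huv⟩ := hD v hv
      exact ⟨u, hu, Finset.mem_insert_of_mem (mem_nb.2 huv)⟩
  have h2 := (Finset.card_le_card h1).trans Finset.card_biUnion_le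
  have h3 : ∑ u ∈ D, (insert u (nb G u)).card ≤ ∑ u ∈ D, 3 := by
    refine Finset.sum_le_sum fun u hu => ?_
    have := hcon u hu
    have := Finset.card_insert_le u (nb G u)
    omega
  rw [Finset.card_univ] at h2
  simp at h3
  omega

/-- An edge whose deletion keeps `D` dominating. -/
def Bad (G : SimpleGraph V) (D : Finset V) (u w : V) : Prop :=
  G.Adj u w ∧ (u ∈ D ∨ w ∈ D) ∧ IsDomSet (G.deleteEdges {s(u, w)}) D

theorem Bad.symm {G : SimpleGraph V} {D : Finset V} {u w : V} (h : Bad G D u w) : Bad G D w u := by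
  refine ⟨h.1.symm, h.2.1.symm, ?_⟩
  rw [Sym2.eq_swap]
  exact h.2.2

theorem op_of_adj {G : SimpleGraph V} {a b z s v v' : V} (ha : z ≠ a) (hb : z ≠ b)
    (h : G.Adj v v') (h1 : v ≠ z) (h2 : v' ≠ z) (h3 : ¬ (v = a ∧ v' = b)) (h4 : ¬ (v = b ∧ v' = a)) :
    (op G a b z s).Adj v v' := by
  rw [op_adj ha hb]; grind

theorem op_az {G : SimpleGraph V} {a b z s : V} (ha : z ≠ a) (hb : z ≠ b) :
    (op G a b z s).Adj a z := by
  rw [op_adj ha hb]; grind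

theorem op_zb {G : SimpleGraph V} {a b z s : V} (ha : z ≠ a) (hb : z ≠ b) :
    (op G a b z s).Adj z b := by
  rw [op_adj ha hb]; grind

theorem tail_ne {G : SimpleGraph V} {a b w u : V} (h : Tail G w u) (hab : G.Adj a b)
    (h1 : ¬ Tail G a b) (h2 : ¬ Tail G b a) : u ≠ a ∧ u ≠ b := by
  constructor
  · rintro rfl
    have h' := h
    cases h with
    | leaf e1 e2 => rw [e2 b hab] at h2; exact h2 h'
    | step e1 e2 e3 e4 e5 =>
      rcases e4 b hab with e | e
      · rw [e] at h2; exact h2 h'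
      · rw [e] at h1; exact h1 e5
  · rintro rfl
    have h' := h
    cases h with
    | leaf e1 e2 => rw [e2 a hab.symm] at h1; exact h1 h'
    | step e1 e2 e3 e4 e5 =>
      rcases e4 a hab.symm with e | e
      · rw [e] at h1; exact h1 h'
      · rw [e] at h2; exact h2 e5

theorem st_init {G : SimpleGraph V} (hG : G.Connected) (hac : G.IsAcyclic) {a b : V}
    (hab : G.Adj a b) (h1 : ¬ Tail G a b) (h2 : ¬ Tail G b a) :
    ∃ S y p, St G S a b y (specRad G) p := by
  have : Nonempty V := ⟨a⟩
  obtain ⟨x, hx, he⟩ := perron G hG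
  have hbr : ¬ (G.deleteEdges {s(a, b)}).Reachable a b :=
    SimpleGraph.isBridge_iff.1 (SimpleGraph.isAcyclic_iff_forall_adj_isBridge.1 hac hab)
  have ha := hx a
  have hb := hx b
  refine ⟨{v | (G.deleteEdges {s(a, b)}).Reachable a v}, x, x b / x a, hG, hx, fun v => (he v).le,
    SimpleGraph.Reachable.refl _, hbr, hab, ?_, ?_, by positivity, ?_⟩
  · intro v hv v' hv' hadj
    by_contra hcon
    apply hv'
    by_cases c : v = b ∧ v' = a
    · rw [c.1] at hv; exact absurd hv hbr
    refine SimpleGraph.Reachable.trans hv (SimpleGraph.Adj.reachable ?_)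
    rw [SimpleGraph.deleteEdges_adj]
    refine ⟨hadj, ?_⟩
    simp only [Set.mem_singleton_iff, Sym2.eq_iff]
    tauto
  · field_simp
  · rw [one_div_div]
    rcases le_total (x a) (x b) with c | c
    · exact hs_est G x _ hx he a b hab h2 c
    · have := hs_est G x _ hx he b a hab.symm h1 c
      linarith

/-- An internal edge: it does not start a pendant path in either direction. -/
def Internal (G : SimpleGraph V) (a b : V) : Prop := G.Adj a b ∧ ¬ Tail G a b ∧ ¬ Tail G b a

theorem pend_tail {G : SimpleGraph V} {z s : V} (h : PendAt G z s) : Tail G s z :=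
  Tail.leaf h.1.symm h.2

theorem ins1 {G : SimpleGraph V} {γ : ℕ} (h : Mn G γ) (hac : G.IsAcyclic) {a b : V}
    (hab : Internal G a b) {z s : V} (hz : PendAt G z s) {D : Finset V} (hD : D.card ≤ γ)
    (hdom : IsDomSet (op G a b z s) D) : False := by
  obtain ⟨S, y, p, hst⟩ := st_init h.conn hac hab.1 hab.2.1 hab.2.2
  obtain ⟨n1, n2⟩ := tail_ne (pend_tail hz) hab.1 hab.2.1 hab.2.2
  obtain ⟨y', st', hlt⟩ := op_step hst n1 n2 hz.1 hz.2
  exact absurd (h.min _ D st'.conn hdom hD)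
    (not_le.2 (specRad_lt_of_super _ st'.conn _ y' st'.pos st'.sup s hlt))

theorem ins2 {G : SimpleGraph V} {γ : ℕ} (h : Mn G γ) (hac : G.IsAcyclic) {a b : V}
    (hab : Internal G a b) {q0 q1 q2 : V} (hz : PendAt G q2 q1) (h01 : G.Adj q0 q1)
    (h02 : q0 ≠ q2) (h1 : ∀ y, G.Adj q1 y → y = q0 ∨ y = q2) {D : Finset V} (hD : D.card + 1 ≤ γ)
    (d1 : q1 ∉ D) (d2 : q2 ∉ D)
    (hdom : ∀ v, v ≠ q1 → v ≠ q2 → v ∉ D → ∃ u ∈ D, G.Adj u v) : False := by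
  obtain ⟨S, y, p, hst⟩ := st_init h.conn hac hab.1 hab.2.1 hab.2.2
  have t2 : Tail G q1 q2 := pend_tail hz
  have t1 : Tail G q0 q1 := Tail.step h01 hz.1.symm h02 h1 t2
  obtain ⟨n1, n2⟩ := tail_ne t2 hab.1 hab.2.1 hab.2.2
  obtain ⟨m1, m2⟩ := tail_ne t1 hab.1 hab.2.1 hab.2.2
  obtain ⟨y', st', -⟩ := op_step hst n1 n2 hz.1 hz.2
  have n12 : q1 ≠ q2 := hz.1.ne.symm
  have n01 : q0 ≠ q1 := h01.ne
  have g1 : (op G a b q2 q1).Adj q1 q0 := op_of_adj n1 n2 h01.symm n12 h02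
    (fun e => m1 e.1) (fun e => m2 e.1)
  have g2 : ∀ y, (op G a b q2 q1).Adj q1 y → y = q0 := by
    intro y hy
    rw [op_adj n1 n2] at hy
    have := h1 y
    grind
  obtain ⟨y2, st2, hlt⟩ := op_step st' m1 n12 g1 g2
  have hmin := fun D' hdom' hD' => absurd (b := False) (h.min _ D' st2.conn hdom' hD')
    (not_le.2 (specRad_lt_of_super _ st2.conn _ y2 st2.pos st2.sup q0 hlt))
  set H := op (op G a b q2 q1) a q2 q1 q0 with hH
  have e1 : H.Adj a q1 := op_az m1 n12
  have e2 : H.Adj q1 q2 := op_zb m1 n12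
  have e3 : H.Adj q2 b := op_of_adj m1 n12 (op_zb n1 n2) n12.symm m2.symm
    (fun e => n1 e.1) (fun e => hab.1.ne e.2.symm)
  have e4 : ∀ v v', G.Adj v v' → v ≠ q1 → v ≠ q2 → v' ≠ q1 → v' ≠ q2 → ¬ (v = a ∧ v' = b) →
      ¬ (v = b ∧ v' = a) → H.Adj v v' := by
    intro v v' hv k1 k2 k3 k4 k5 k6
    exact op_of_adj m1 n12 (op_of_adj n1 n2 hv k2 k4 k5 k6) k1 k3 (fun e => k4 e.2) (fun e => k2 e.1)
  clear_value H
  by_cases hb : b ∈ D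
  · refine hmin (insert q1 D) ?_ ((Finset.card_insert_le _ _).trans hD)
    intro v hv
    simp only [Finset.mem_insert, not_or] at hv
    by_cases v2 : v = q2
    · exact ⟨q1, Finset.mem_insert_self _ _, v2 ▸ e2⟩
    by_cases va : v = a
    · exact ⟨q1, Finset.mem_insert_self _ _, va ▸ e1.symm⟩
    obtain ⟨u, hu, huv⟩ := hdom v hv.1 v2 hv.2
    refine ⟨u, Finset.mem_insert_of_mem hu, e4 u v huv ?_ ?_ hv.1 v2 ?_ ?_⟩ <;> grind
  · refine hmin (insert q2 D) ?_ ((Finset.card_insert_le _ _).trans hD)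
    intro v hv
    simp only [Finset.mem_insert, not_or] at hv
    by_cases v2 : v = q1
    · exact ⟨q2, Finset.mem_insert_self _ _, v2 ▸ e2.symm⟩
    by_cases va : v = b
    · exact ⟨q2, Finset.mem_insert_self _ _, va ▸ e3⟩
    obtain ⟨u, hu, huv⟩ := hdom v v2 hv.1 hv.2
    refine ⟨u, Finset.mem_insert_of_mem hu, e4 u v huv ?_ ?_ v2 hv.1 ?_ ?_⟩ <;> grind

theorem ins3 {G : SimpleGraph V} {γ : ℕ} (h : Mn G γ) (hac : G.IsAcyclic) {a b : V}
    (hab : Internal G a b) {q0 q1 q2 q3 : V} (hz : PendAt G q3 q2) (h12 : G.Adj q1 q2)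
    (h13 : q1 ≠ q3) (h2 : ∀ y, G.Adj q2 y → y = q1 ∨ y = q3) (h01 : G.Adj q0 q1)
    (h02 : q0 ≠ q2) (h1 : ∀ y, G.Adj q1 y → y = q0 ∨ y = q2)
    {D : Finset V} (hD : D.card + 1 ≤ γ)
    (d1 : q1 ∉ D) (d2 : q2 ∉ D) (d3 : q3 ∉ D)
    (hdom : ∀ v, v ≠ q1 → v ≠ q2 → v ≠ q3 → v ∉ D → ∃ u ∈ D, G.Adj u v) : False := by
  obtain ⟨S, y, p, hst⟩ := st_init h.conn hac hab.1 hab.2.1 hab.2.2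
  have t3 : Tail G q2 q3 := pend_tail hz
  have t2 : Tail G q1 q2 := Tail.step h12 hz.1.symm h13 h2 t3
  have t1 : Tail G q0 q1 := Tail.step h01 h12 h02 h1 t2
  obtain ⟨n1, n2⟩ := tail_ne t3 hab.1 hab.2.1 hab.2.2
  obtain ⟨m1, m2⟩ := tail_ne t2 hab.1 hab.2.1 hab.2.2
  obtain ⟨l1, l2⟩ := tail_ne t1 hab.1 hab.2.1 hab.2.2
  obtain ⟨y', st', -⟩ := op_step hst n1 n2 hz.1 hz.2
  have n23 : q2 ≠ q3 := hz.1.ne.symm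
  have n12 : q1 ≠ q2 := h12.ne
  have n01 : q0 ≠ q1 := h01.ne
  have n03 : q0 ≠ q3 := by
    rintro rfl
    exact n12 (hz.2 _ h01)
  have g1 : (op G a b q3 q2).Adj q2 q1 := op_of_adj n1 n2 h12.symm n23 h13
    (fun e => m1 e.1) (fun e => m2 e.1)
  have g2 : ∀ y, (op G a b q3 q2).Adj q2 y → y = q1 := by
    intro y hy
    rw [op_adj n1 n2] at hy
    have := h2 y
    grind
  have g3 : ∀ y, (op G a b q3 q2).Adj q1 y → y = q0 ∨ y = q2 := by
    intro y hy
    rw [op_adj n1 n2] at hy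
    have := h1 y
    grind
  have g4 : (op G a b q3 q2).Adj q1 q0 := op_of_adj n1 n2 h01.symm h13 n03
    (fun e => l1 e.1) (fun e => l2 e.1)
  have hG1 : (op G a b q3 q2).Adj q3 b := op_zb n1 n2
  have hG2 : ∀ v v', G.Adj v v' → v ≠ q3 → v' ≠ q3 → ¬ (v = a ∧ v' = b) →
      ¬ (v = b ∧ v' = a) → (op G a b q3 q2).Adj v v' := fun v v' => op_of_adj n1 n2
  generalize op G a b q3 q2 = G1 at *
  obtain ⟨y2, st2, -⟩ := op_step st' m1 n23 g1 g2
  have f1 : (op G1 a q3 q2 q1).Adj q1 q0 := op_of_adj m1 n23 g4 n12 h02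
    (fun e => l1 e.1) (fun e => h13 e.1)
  have f2 : ∀ y, (op G1 a q3 q2 q1).Adj q1 y → y = q0 := by
    intro y hy
    rw [op_adj m1 n23] at hy
    have := g3 y
    grind
  have hH1 : (op G1 a q3 q2 q1).Adj q2 q3 := op_zb m1 n23
  have hH2 : (op G1 a q3 q2 q1).Adj q3 b := op_of_adj m1 n23 hG1 n23.symm m2.symm
    (fun e => n1 e.1) (fun e => hab.1.ne e.2.symm)
  have hH3 : ∀ v v', G.Adj v v' → v ≠ q2 → v' ≠ q2 → v ≠ q3 → v' ≠ q3 → ¬ (v = a ∧ v' = b) →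
      ¬ (v = b ∧ v' = a) → (op G1 a q3 q2 q1).Adj v v' := fun v v' h k1 k2 k3 k4 k5 k6 =>
    op_of_adj m1 n23 (hG2 v v' h k3 k4 k5 k6) k1 k2 (fun e => k4 e.2) (fun e => k3 e.1)
  generalize op G1 a q3 q2 q1 = G2 at *
  obtain ⟨y3, st3, hlt⟩ := op_step st2 l1 n12 f1 f2
  have hmin := fun D' hdom' hD' => absurd (b := False) (h.min _ D' st3.conn hdom' hD')
    (not_le.2 (specRad_lt_of_super _ st3.conn _ y3 st3.pos st3.sup q0 hlt))
  have e1 : (op G2 a q2 q1 q0).Adj a q1 := op_az l1 n12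
  have e2 : (op G2 a q2 q1 q0).Adj q1 q2 := op_zb l1 n12
  have e3 : (op G2 a q2 q1 q0).Adj q2 q3 := op_of_adj l1 n12 hH1 n12.symm h13.symm
    (fun e => m1 e.1) (fun e => n1 e.2)
  have e4 : (op G2 a q2 q1 q0).Adj q3 b := op_of_adj l1 n12 hH2 h13.symm l2.symm
    (fun e => n1 e.1) (fun e => n23 e.1.symm)
  have e5 : ∀ v v', G.Adj v v' → v ≠ q1 → v' ≠ q1 → v ≠ q2 → v' ≠ q2 → v ≠ q3 → v' ≠ q3 →
      ¬ (v = a ∧ v' = b) → ¬ (v = b ∧ v' = a) → (op G2 a q2 q1 q0).Adj v v' :=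
    fun v v' h j1 j2 k1 k2 k3 k4 k5 k6 =>
    op_of_adj l1 n12 (hH3 v v' h k1 k2 k3 k4 k5 k6) j1 j2 (fun e => k2 e.2) (fun e => k1 e.1)
  generalize op G2 a q2 q1 q0 = H at *
  clear hlt st3 st2 st' hG1 hG2 hH1 hH2 hH3 g1 g2 g3 g4 f1 f2 y' y2 y3 hst G1 G2
  by_cases hb : b ∈ D
  · refine hmin (insert q1 D) ?_ ((Finset.card_insert_le _ _).trans hD)
    intro v hv
    simp only [Finset.mem_insert, not_or] at hv
    by_cases v2 : v = q2
    · exact ⟨q1, Finset.mem_insert_self _ _, v2 ▸ e2⟩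
    by_cases v3 : v = q3
    · exact ⟨b, Finset.mem_insert_of_mem hb, v3 ▸ e4.symm⟩
    by_cases va : v = a
    · exact ⟨q1, Finset.mem_insert_self _ _, va ▸ e1.symm⟩
    obtain ⟨u, hu, huv⟩ := hdom v hv.1 v2 v3 hv.2
    refine ⟨u, Finset.mem_insert_of_mem hu, e5 u v huv ?_ hv.1 ?_ v2 ?_ v3 ?_ ?_⟩ <;> grind
  by_cases ha : a ∈ D
  · refine hmin (insert q3 D) ?_ ((Finset.card_insert_le _ _).trans hD)
    intro v hv
    simp only [Finset.mem_insert, not_or] at hv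
    by_cases v2 : v = q2
    · exact ⟨q3, Finset.mem_insert_self _ _, v2 ▸ e3.symm⟩
    by_cases v1 : v = q1
    · exact ⟨a, Finset.mem_insert_of_mem ha, v1 ▸ e1⟩
    by_cases vb : v = b
    · exact ⟨q3, Finset.mem_insert_self _ _, vb ▸ e4⟩
    obtain ⟨u, hu, huv⟩ := hdom v v1 v2 hv.1 hv.2
    refine ⟨u, Finset.mem_insert_of_mem hu, e5 u v huv ?_ v1 ?_ v2 ?_ hv.1 ?_ ?_⟩ <;> grind
  · refine hmin (insert q2 D) ?_ ((Finset.card_insert_le _ _).trans hD)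
    intro v hv
    simp only [Finset.mem_insert, not_or] at hv
    by_cases v1 : v = q1
    · exact ⟨q2, Finset.mem_insert_self _ _, v1 ▸ e2.symm⟩
    by_cases v3 : v = q3
    · exact ⟨q2, Finset.mem_insert_self _ _, v3 ▸ e3⟩
    obtain ⟨u, hu, huv⟩ := hdom v v1 hv.1 v3 hv.2
    refine ⟨u, Finset.mem_insert_of_mem hu, e5 u v huv ?_ v1 ?_ hv.1 ?_ v3 ?_ ?_⟩ <;> grind

theorem tail_tri {G : SimpleGraph V} {w u : V} (h : Tail G w u) :
    PendAt G u w ∨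
    (∃ c, PendAt G c u ∧ G.Adj w u ∧ w ≠ c ∧ ∀ y, G.Adj u y → y = w ∨ y = c) ∨
    (∃ q0 q1 q2 q3, PendAt G q3 q2 ∧ G.Adj q1 q2 ∧ q1 ≠ q3 ∧ (∀ y, G.Adj q2 y → y = q1 ∨ y = q3) ∧
      G.Adj q0 q1 ∧ q0 ≠ q2 ∧ ∀ y, G.Adj q1 y → y = q0 ∨ y = q2) := by
  induction h with
  | leaf h1 h2 => exact Or.inl ⟨h1.symm, h2⟩
  | @step w u u2 h1 h2 h3 h4 h5 ih =>
    rcases ih with ih | ⟨c, i1, i2, i3, i4⟩ | ih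
    · exact Or.inr (Or.inl ⟨u2, ih, h1, h3, h4⟩)
    · exact Or.inr (Or.inr ⟨w, u, u2, c, i1, i2, i3, i4, h1, h3, h4⟩)
    · exact Or.inr (Or.inr ih)

theorem caseA {G : SimpleGraph V} {γ : ℕ} (h : Mn G γ) {D0 : Finset V} (hD0 : IsDomSet G D0)
    (hc0 : D0.card ≤ γ) {a b : V} (hab : Internal G a b) :
    (∀ D, IsDomSet G D → γ ≤ D.card) ∧
      ∃ D, IsDomSet G D ∧ D.card = γ ∧ ∀ u w, ¬ Bad G D u w := by
  have hac := acyc h hD0 hc0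
  have hcard := h.card
  have h2 := h.two
  obtain ⟨z, t, hz⟩ := exists_pend h.conn hac (by omega)
  obtain ⟨zn1, zn2⟩ := tail_ne (pend_tail hz) hab.1 hab.2.1 hab.2.2
  have slack : ∀ D, IsDomSet G D → γ ≤ D.card := by
    intro D hD
    by_contra hlt
    push Not at hlt
    obtain ⟨D', hD', hc', hp'⟩ := norm_dom h.conn (by omega) hD
    have hzD := hp' z t hz
    refine ins1 h hac hab hz (D := insert z D')
      ((Finset.card_insert_le _ _).trans (by omega)) ?_
    intro v hv
    simp only [Finset.mem_insert, not_or] at hv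
    by_cases va : v = a
    · exact ⟨z, Finset.mem_insert_self _ _, by rw [va]; exact (op_az zn1 zn2).symm⟩
    by_cases vb : v = b
    · exact ⟨z, Finset.mem_insert_self _ _, by rw [vb]; exact op_zb zn1 zn2⟩
    obtain ⟨u, hu, huv⟩ := hD' v hv.2
    exact ⟨u, Finset.mem_insert_of_mem hu, op_of_adj zn1 zn2 huv (fun e => hzD (e ▸ hu)) hv.1
      (fun e => vb e.2) (fun e => va e.2)⟩
  refine ⟨slack, ?_⟩
  obtain ⟨D, hD, hc, hp⟩ := norm_dom h.conn (by omega) hD0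
  have hcD : D.card = γ := le_antisymm (hc.trans hc0) (slack D hD)
  refine ⟨D, hD, hcD, ?_⟩
  have main : ∀ u w, Tail G u w → ¬ Bad G D u w := by
    intro u w ht hbad
    rcases tail_tri ht with h1 | ⟨c, i1, i2, i3, i4⟩ | ⟨q0, q1, q2, q3, i1, i2, i3, i4, i5, i6, i7⟩
    · obtain ⟨d, hd, hdw⟩ := hbad.2.2 w (hp _ _ h1)
      rw [SimpleGraph.deleteEdges_adj] at hdw
      have := h1.2 d hdw.1.symm
      subst this
      exact hdw.2 rfl
    · have hcn := hp _ _ i1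
      have hw : w ∈ D := by
        obtain ⟨d, hd, hdc⟩ := hD c hcn
        rwa [i1.2 d hdc.symm] at hd
      refine ins2 h hac hab i1 i2 i3 i4 (D := D.erase w) ?_ (Finset.notMem_erase _ _)
        (fun hh => hcn (Finset.mem_of_mem_erase hh)) ?_
      · rw [Finset.card_erase_of_mem hw]
        omega
      · intro v v1 v2 v3
        have v3' : v ∉ D := fun hh => v3 (Finset.mem_erase.2 ⟨v1, hh⟩)
        obtain ⟨d, hd, hdv⟩ := hbad.2.2 v v3'
        rw [SimpleGraph.deleteEdges_adj] at hdv
        refine ⟨d, Finset.mem_erase.2 ⟨?_, hd⟩, hdv.1⟩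
        rintro rfl
        rcases i4 v hdv.1 with e | e
        · subst e
          apply hdv.2
          rw [Sym2.eq_swap]
          rfl
        · exact v2 e
    · have hcn := hp _ _ i1
      have hw : q2 ∈ D := by
        obtain ⟨d, hd, hdc⟩ := hD q3 hcn
        rwa [i1.2 d hdc.symm] at hd
      have n23 := i1.1.ne
      have n12 := i2.ne
      have n01 := i5.ne
      have n03 : q0 ≠ q3 := by
        rintro rfl
        exact n12 (i1.2 _ i5)
      by_cases hq1 : q1 ∈ D
      · have ce : ((D.erase q2).erase q1).card + 2 = D.card := by
          have hm : q1 ∈ D.erase q2 := Finset.mem_erase.2 ⟨n12, hq1⟩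
          have k1 := Finset.card_erase_add_one hm
          have k2 := Finset.card_erase_add_one hw
          omega
        refine ins3 h hac hab i1 i2 i3 i4 i5 i6 i7 (D := insert q0 ((D.erase q2).erase q1)) ?_
          (by simp [n01.symm]) (by simp [i6.symm]) (by simp [n03.symm, hcn]) ?_
        · have := Finset.card_insert_le q0 ((D.erase q2).erase q1)
          omega
        · intro v v1 v2 v3 v4
          simp only [Finset.mem_insert, Finset.mem_erase, not_or, not_and] at v4
          obtain ⟨d, hd, hdv⟩ := hD v (v4.2 v1 v2)
          refine ⟨d, ?_, hdv⟩
          simp only [Finset.mem_insert, Finset.mem_erase]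
          right
          refine ⟨?_, ?_, hd⟩
          · rintro rfl
            rcases i7 v hdv with e | e
            · exact v4.1 e
            · exact v2 e
          · rintro rfl
            rcases i4 v hdv with e | e
            · exact v1 e
            · exact v3 e
      · refine ins3 h hac hab i1 i2 i3 i4 i5 i6 i7 (D := D.erase q2) ?_
          (by simp [hq1]) (by simp) (by simp [hcn]) ?_
        · rw [Finset.card_erase_of_mem hw]
          omega
        · intro v v1 v2 v3 v4
          have v4' : v ∉ D := fun hh => v4 (Finset.mem_erase.2 ⟨v2, hh⟩)
          obtain ⟨d, hd, hdv⟩ := hD v v4'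
          refine ⟨d, Finset.mem_erase.2 ⟨?_, hd⟩, hdv⟩
          rintro rfl
          rcases i4 v hdv with e | e
          · exact v1 e
          · exact v3 e
  intro u w hbad
  by_cases t1 : Tail G u w
  · exact main u w t1 hbad
  by_cases t2 : Tail G w u
  · exact main w u t2 hbad.symm
  have huwI : Internal G u w := ⟨hbad.1, t1, t2⟩
  obtain ⟨k1, k2⟩ := tail_ne (pend_tail hz) huwI.1 huwI.2.1 huwI.2.2
  refine ins1 h hac huwI hz hcD.le ?_
  intro v hv
  by_cases vz : v = z
  · rcases hbad.2.1 with e | e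
    · exact ⟨u, e, by rw [vz]; exact op_az k1 k2⟩
    · exact ⟨w, e, by rw [vz]; exact (op_zb k1 k2).symm⟩
  obtain ⟨d, hd, hdv⟩ := hbad.2.2 v hv
  rw [SimpleGraph.deleteEdges_adj] at hdv
  have hzD := hp z t hz
  simp only [Set.mem_singleton_iff, Sym2.eq_iff, not_or] at hdv
  exact ⟨d, hd, op_of_adj k1 k2 hdv.1 (fun e => hzD (e ▸ hd)) vz hdv.2.1 hdv.2.2⟩

theorem tail_deg {G : SimpleGraph V} {w u : V} (h : Tail G w u) : (nb G u).card ≤ 2 := by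
  cases h with
  | leaf h1 h2 =>
    have : nb G u ⊆ {w} := by
      intro y hy
      simpa using h2 y (mem_nb.1 hy)
    have := Finset.card_le_card this
    simp at this
    omega
  | @step _ _ u2 h1 h2 h3 h4 h5 =>
    have : nb G u ⊆ {w, u2} := by
      intro y hy
      simpa using h4 y (mem_nb.1 hy)
    exact (Finset.card_le_card this).trans Finset.card_le_two

theorem exists_closer {G : SimpleGraph V} (hG : G.Connected) {h v : V} (hv : v ≠ h) :
    ∃ w, G.Adj w v ∧ G.dist h w + 1 = G.dist h v := by
  obtain ⟨p, hp⟩ := (hG.preconnected v h).exists_walk_length_eq_dist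
  cases p with
  | nil => exact absurd rfl hv
  | @cons _ w _ e q =>
    refine ⟨w, e.symm, ?_⟩
    have h1 : G.dist w h ≤ q.length := SimpleGraph.dist_le q
    have h2 : G.dist v h ≤ G.dist v w + G.dist w h := hG.dist_triangle
    have h3 : G.dist v w = 1 := SimpleGraph.dist_eq_one_iff_adj.2 e
    rw [SimpleGraph.Walk.length_cons] at hp
    rw [G.dist_comm (u := h) (v := w), G.dist_comm (u := h) (v := v)]
    omega

theorem par {G : SimpleGraph V} (hG : G.Connected)
    (hB : ∀ a b, G.Adj a b → Tail G a b ∨ Tail G b a) {h : V} (hh : 3 ≤ (nb G h).card) :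
    ∀ (k : ℕ) (v : V), G.dist h v = k → v ≠ h →
      ∃ w, G.Adj w v ∧ G.dist h w + 1 = G.dist h v ∧ Tail G w v := by
  intro k
  induction k with
  | zero =>
    intro v h1 h2
    obtain ⟨w, h3, h4⟩ := exists_closer hG h2
    omega
  | succ k ih =>
    intro v h1 h2
    obtain ⟨w, h3, h4⟩ := exists_closer hG h2
    refine ⟨w, h3, h4, ?_⟩
    by_cases hw : w = h
    · subst hw
      rcases hB w v h3 with t | t
      · exact t
      · have := tail_deg t; omega
    · obtain ⟨w0, h5, h6, h7⟩ := ih w (by omega) hw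
      have hne : v ≠ w0 := by rintro rfl; omega
      cases h7 with
      | leaf e1 e2 => exact absurd (e2 v h3) hne
      | step e1 e2 e3 e4 e5 =>
        rcases e4 v h3 with e | e
        · exact absurd e hne
        · rw [e]; exact e5

theorem deg_le {G : SimpleGraph V} (hG : G.Connected)
    (hB : ∀ a b, G.Adj a b → Tail G a b ∨ Tail G b a) {h : V} (hh : 3 ≤ (nb G h).card) {v : V}
    (hv : v ≠ h) : (nb G v).card ≤ 2 := by
  obtain ⟨w, _, _, t⟩ := par hG hB hh _ v rfl hv
  exact tail_deg t

theorem tail_end {G : SimpleGraph V} {h v1 : V} (hh : 3 ≤ (nb G h).card) {w u : V}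
    (ht : Tail G w u) (hne : s(w, u) ≠ s(h, v1)) :
    ∃ z t, PendAt G z t ∧ z ≠ h ∧ (G.deleteEdges {s(h, v1)}).Reachable w z := by
  induction ht with
  | @leaf w u h1 h2 =>
    refine ⟨u, w, ⟨h1.symm, h2⟩, ?_, ?_⟩
    · rintro rfl
      have := tail_deg (Tail.leaf h1 h2)
      omega
    · apply SimpleGraph.Adj.reachable
      rw [SimpleGraph.deleteEdges_adj]
      exact ⟨h1, hne⟩
  | @step w u u2 h1 h2 h3 h4 h5 ih =>
    have hu : u ≠ h := by
      rintro rfl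
      have := tail_deg (Tail.step h1 h2 h3 h4 h5)
      omega
    have hu2 : u2 ≠ h := by
      rintro rfl
      have := tail_deg h5
      omega
    obtain ⟨z, t, i1, i2, i3⟩ := ih (by
      rw [Ne, Sym2.eq_iff]
      rintro (e | e)
      · exact hu e.1
      · exact hu2 e.2)
    refine ⟨z, t, i1, i2, SimpleGraph.Reachable.trans ?_ i3⟩
    apply SimpleGraph.Adj.reachable
    rw [SimpleGraph.deleteEdges_adj]
    exact ⟨h1, hne⟩

theorem specRad_gt_two {G : SimpleGraph V} (hG : G.Connected) (hc : 7 ≤ Fintype.card V) {h : V}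
    (hh : 4 ≤ (nb G h).card) : 2 < specRad G := by
  have : Nonempty V := ⟨h⟩
  obtain ⟨x, hx, he⟩ := perron G hG
  set ρ := specRad G
  have hxh := hx h
  have e1 : ρ * (ρ * x h) = ∑ v ∈ nb G h, sm G x v := by
    rw [← he h, sm, Finset.mul_sum]
    exact Finset.sum_congr rfl fun v _ => (he v).symm
  have e2 : ∀ v ∈ nb G h, x h ≤ sm G x v := fun v hv => sm_ge_one hx (mem_nb.1 hv).symm
  have e3 : ∑ v ∈ nb G h, x h = (nb G h).card * x h := by
    rw [Finset.sum_const, nsmul_eq_mul]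
  have hpos : 0 < ρ := by
    obtain ⟨v, hv⟩ : (nb G h).Nonempty := by
      rw [← Finset.card_pos]; omega
    have := sm_ge_one hx (mem_nb.1 hv)
    rw [he h] at this
    have := hx v
    by_contra hcon
    nlinarith
  have h4 : (4 : ℝ) ≤ (nb G h).card := by exact_mod_cast hh
  have key : 4 * x h < ρ * (ρ * x h) := by
    rw [e1]
    by_cases hex : ∃ v y, G.Adj h v ∧ G.Adj v y ∧ y ≠ h
    · obtain ⟨v, y, h1, h2, h3⟩ := hex
      have : ∑ v ∈ nb G h, x h < ∑ v ∈ nb G h, sm G x v := by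
        refine Finset.sum_lt_sum e2 ⟨v, mem_nb.2 h1, ?_⟩
        have hsub : ({h, y} : Finset V) ⊆ nb G v := by
          intro u hu
          simp only [Finset.mem_insert, Finset.mem_singleton] at hu
          rw [mem_nb]
          rcases hu with rfl | rfl
          · exact h1.symm
          · exact h2
        have := Finset.sum_le_sum_of_subset_of_nonneg (f := x) hsub (fun i _ _ => (hx i).le)
        rw [Finset.sum_pair h3.symm] at this
        have := hx y
        unfold sm
        linarith
      rw [e3] at this
      nlinarith
    · push Not at hex
      have hcl := closed_univ hG (P := fun v => v = h ∨ G.Adj h v) (a := h) (Or.inl rfl) (by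
        rintro v w (rfl | hv) hw
        · right; exact hw
        · left; exact hex v w hv hw)
      have hsub : (Finset.univ : Finset V) ⊆ insert h (nb G h) := by
        intro v _
        rw [Finset.mem_insert, mem_nb]
        exact hcl v
      have h5 := (Finset.card_le_card hsub).trans (Finset.card_insert_le _ _)
      rw [Finset.card_univ] at h5
      have h6 : (5 : ℝ) ≤ (nb G h).card := by
        have : 5 ≤ (nb G h).card := by omega
        exact_mod_cast this
      have := Finset.sum_le_sum e2
      rw [e3] at this
      nlinarith
  by_contra hcon
  push Not at hcon
  nlinarith [mul_le_mul_of_nonneg_right hcon hpos.le]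

theorem move {G : SimpleGraph V} {γ : ℕ} (hM : Mn G γ) (hac : G.IsAcyclic)
    (hB : ∀ a b, G.Adj a b → Tail G a b ∨ Tail G b a) {h : V} (hh : 3 ≤ (nb G h).card) {v1 : V}
    (hv1 : G.Adj h v1) {D : Finset V} (hc : D.card ≤ γ)
    (hD : IsDomSet (G.deleteEdges {s(h, v1)}) D) : False := by
  classical
  have : Nonempty V := ⟨h⟩
  have hcard := hM.card
  have h2 := hM.two
  have hbr : ¬ (G.deleteEdges {s(h, v1)}).Reachable h v1 :=
    SimpleGraph.isBridge_iff.1 (SimpleGraph.isAcyclic_iff_forall_adj_isBridge.1 hac hv1)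
  obtain ⟨v2, hv2, hv21⟩ : ∃ v2 ∈ nb G h, v2 ≠ v1 :=
    Finset.exists_mem_ne (by omega) v1
  rw [mem_nb] at hv2
  have ht2 : Tail G h v2 := by
    rcases hB h v2 hv2 with t | t
    · exact t
    · have := tail_deg t; omega
  obtain ⟨z, t, hz, hzh, hreach⟩ := tail_end (v1 := v1) hh ht2 (by
    rw [Ne, Sym2.eq_iff]
    rintro (e | e)
    · exact hv21 e.2
    · exact hv1.ne e.1)
  have hzv1 : z ≠ v1 := by rintro rfl; exact hbr hreach
  have hnz : ¬ G.Adj z v1 := by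
    intro ha
    refine hbr (hreach.trans (SimpleGraph.Adj.reachable ?_))
    rw [SimpleGraph.deleteEdges_adj]
    refine ⟨ha, ?_⟩
    rw [Set.mem_singleton_iff, Sym2.eq_iff]
    rintro (e | e)
    · exact hzh e.1
    · exact hzv1 e.1
  have hh1 : h ≠ v1 := hv1.ne
  obtain ⟨H, hH⟩ : ∃ H, H = (G.deleteEdges {s(h, v1)}) ⊔ edge z v1 := ⟨_, rfl⟩
  have hle : G.deleteEdges {s(h, v1)} ≤ H := hH ▸ le_sup_left
  have hadj : ∀ v v', H.Adj v v' ↔ (G.Adj v v' ∧ ¬ (v = h ∧ v' = v1) ∧ ¬ (v = v1 ∧ v' = h)) ∨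
      (v = z ∧ v' = v1) ∨ (v = v1 ∧ v' = z) := by
    intro v v'
    rw [hH]
    simp only [SimpleGraph.sup_adj, SimpleGraph.deleteEdges_adj, SimpleGraph.edge_adj,
      Set.mem_singleton_iff, Sym2.eq_iff]
    have : z ≠ v1 := hzv1
    constructor
    · rintro (e | e)
      · left; exact ⟨e.1, not_or.1 e.2⟩
      · right; tauto
    · rintro (e | e | e)
      · left; exact ⟨e.1, not_or.2 e.2⟩
      · right; exact ⟨by tauto, by rw [e.1, e.2]; exact hzv1⟩
      · right; exact ⟨by tauto, by rw [e.1, e.2]; exact hzv1.symm⟩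
  have hzv : H.Adj z v1 := (hadj _ _).2 (Or.inr (Or.inl ⟨rfl, rfl⟩))
  have rv1 : H.Reachable h v1 := (hreach.mono hle).trans hzv.reachable
  have hHc : H.Connected := by
    refine SimpleGraph.Connected.mk ?_
    have r : ∀ v, H.Reachable h v := closed_univ hM.conn (P := fun v => H.Reachable h v)
      (SimpleGraph.Reachable.refl _) (by
        intro v w hv hvw
        by_cases c1 : v = h ∧ w = v1
        · rw [c1.2]; exact rv1
        by_cases c2 : v = v1 ∧ w = h
        · rw [c2.2]
        exact hv.trans (SimpleGraph.Adj.reachable ((hadj _ _).2 (Or.inl ⟨hvw, c1, c2⟩))))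
    exact fun u v => (r u).symm.trans (r v)
  have hDH : IsDomSet H D := by
    intro v hv
    obtain ⟨u, hu, huv⟩ := hD v hv
    exact ⟨u, hu, hle huv⟩
  have nbh : nb H h = (nb G h).erase v1 := by
    ext u
    rw [mem_nb, hadj, Finset.mem_erase, mem_nb]
    constructor
    · rintro (e | e | e)
      · exact ⟨fun e' => e.2.1 ⟨rfl, e'⟩, e.1⟩
      · exact absurd e.1.symm hzh
      · exact absurd e.1 hh1
    · rintro ⟨e1, e2⟩
      exact Or.inl ⟨e2, fun e => e1 e.2, fun e => hh1 e.1⟩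
  have nbv : nb H v1 = insert z ((nb G v1).erase h) := by
    ext u
    rw [mem_nb, hadj, Finset.mem_insert, Finset.mem_erase, mem_nb]
    constructor
    · rintro (e | e | e)
      · exact Or.inr ⟨fun e' => e.2.2 ⟨rfl, e'⟩, e.1⟩
      · exact absurd e.1.symm hzv1
      · exact Or.inl e.2
    · rintro (e | ⟨e1, e2⟩)
      · exact Or.inr (Or.inr ⟨rfl, e⟩)
      · exact Or.inl ⟨e2, fun e => hh1 e.1.symm, fun e => e1 e.2⟩
  have nbz : nb H z = insert v1 (nb G z) := by
    ext u
    rw [mem_nb, hadj, Finset.mem_insert, mem_nb]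
    constructor
    · rintro (e | e | e)
      · exact Or.inr e.1
      · exact Or.inl e.2
      · exact absurd e.1 hzv1
    · rintro (e | e)
      · exact Or.inr (Or.inl ⟨rfl, e⟩)
      · exact Or.inl ⟨e, fun e => hzh e.1, fun e => hzv1 e.1⟩
  have nbo : ∀ v, v ≠ h → v ≠ v1 → v ≠ z → nb H v = nb G v := by
    intro v k1 k2 k3
    ext u
    rw [mem_nb, hadj, mem_nb]
    tauto
  have degH : ∀ v, v ≠ h → (nb H v).card ≤ 2 := by
    intro v hv
    by_cases k2 : v = v1
    · rw [k2, nbv]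
      have i1 := deg_le hM.conn hB hh hh1.symm
      have i2 := Finset.card_insert_le z ((nb G v1).erase h)
      have i3 := Finset.card_erase_add_one (mem_nb.2 hv1.symm)
      omega
    by_cases k3 : v = z
    · rw [k3, nbz]
      have i2 := Finset.card_insert_le v1 (nb G z)
      have i3 : nb G z ⊆ {t} := by
        intro y hy
        simpa using hz.2 y (mem_nb.1 hy)
      have := Finset.card_le_card i3
      rw [Finset.card_singleton] at this
      omega
    rw [nbo v hv k2 k3]
    exact deg_le hM.conn hB hh hv
  obtain ⟨u, hu, hu3⟩ := exists_deg3 hDH (by omega)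
  have huh : u = h := by
    by_contra hne
    have := degH u hne
    omega
  have h4 : 4 ≤ (nb G h).card := by
    rw [huh, nbh] at hu3
    have i3 := Finset.card_erase_add_one (mem_nb.2 hv1)
    omega
  have hgt := specRad_gt_two hM.conn (by omega) h4
  have hle2 := hM.min H D hHc hDH hc
  obtain ⟨x, hx, he⟩ := perron H hHc
  have hargmax : ∀ m, (∀ v, x v ≤ x m) → m = h := by
    intro m hm
    by_contra hne
    have i1 : sm H x m ≤ (nb H m).card * x m := by
      rw [sm, ← nsmul_eq_mul]
      exact Finset.sum_le_card_nsmul _ _ _ fun v _ => hm v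
    have i2 : ((nb H m).card : ℝ) ≤ 2 := by exact_mod_cast degH m hne
    have i3 := hx m
    rw [he m] at i1
    nlinarith
  have hlt : x z < x h := by
    obtain ⟨m, -, hm⟩ := Finset.exists_max_image Finset.univ x ⟨h, Finset.mem_univ _⟩
    have hmh := hargmax m fun v => hm v (Finset.mem_univ _)
    subst hmh
    refine lt_of_le_of_ne (hm z (Finset.mem_univ _)) fun e => hzh (hargmax z fun v => ?_)
    rw [e]
    exact hm v (Finset.mem_univ _)
  have sh : sm G x h = sm H x h + x v1 := by
    rw [sm, sm, nbh, Finset.sum_erase_add _ _ (mem_nb.2 hv1)]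
  have sv : sm G x v1 = sm H x v1 + (x h - x z) := by
    rw [sm, sm, nbv, Finset.sum_insert, ← Finset.sum_erase_add (nb G v1) x (mem_nb.2 hv1.symm)]
    · ring
    · rw [Finset.mem_erase, mem_nb]
      exact fun e => hnz e.2.symm
  have sz : sm G x z = sm H x z - x v1 := by
    rw [sm, sm, nbz, Finset.sum_insert]
    · ring
    · rw [mem_nb]; exact hnz
  have so : ∀ v, v ≠ h → v ≠ v1 → v ≠ z → sm G x v = sm H x v := by
    intro v k1 k2 k3
    rw [sm, sm, nbo v k1 k2 k3]
  have hall : ∀ v, x v * sm G x v = specRad H * x v ^ 2 + (if v = h then x h * x v1 else 0) +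
      (if v = v1 then x v1 * (x h - x z) else 0) + (if v = z then - (x z * x v1) else 0) := by
    intro v
    by_cases k1 : v = h
    · rw [k1, sh, he h, if_pos rfl, if_neg hh1, if_neg hzh.symm]; ring
    by_cases k2 : v = v1
    · rw [k2, sv, he v1, if_pos rfl, if_neg hh1.symm, if_neg hzv1.symm]; ring
    by_cases k3 : v = z
    · rw [k3, sz, he z, if_pos rfl, if_neg hzh, if_neg hzv1]; ring
    · rw [so v k1 k2 k3, he v, if_neg k1, if_neg k2, if_neg k3]; ring
  have hsum : ∑ v, x v * sm G x v = specRad H * ∑ v, x v ^ 2 + 2 * (x v1 * (x h - x z)) := by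
    rw [Finset.sum_congr rfl fun v _ => hall v, Finset.sum_add_distrib, Finset.sum_add_distrib,
      Finset.sum_add_distrib, ← Finset.mul_sum]
    simp only [Finset.sum_ite_eq', Finset.mem_univ, if_true]
    ring
  have hr := rayleigh G x
  rw [hsum] at hr
  have hs0 : 0 ≤ ∑ v, x v ^ 2 := Finset.sum_nonneg fun v _ => sq_nonneg _
  have := mul_le_mul_of_nonneg_right hle2 hs0
  have := mul_pos (hx v1) (sub_pos.2 hlt)
  linarith

theorem caseB {G : SimpleGraph V} {γ : ℕ} (hM : Mn G γ) {D0 : Finset V} (hD0 : IsDomSet G D0)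
    (hc0 : D0.card ≤ γ) (hB : ∀ a b, G.Adj a b → Tail G a b ∨ Tail G b a) :
    (∀ D, IsDomSet G D → γ ≤ D.card) ∧
      ∃ D, IsDomSet G D ∧ D.card = γ ∧ ∀ u w, ¬ Bad G D u w := by
  classical
  have hac := acyc hM hD0 hc0
  have hcard := hM.card
  have h2 := hM.two
  obtain ⟨h, -, hh⟩ := exists_deg3 hD0 (by omega)
  have hmem : ∀ D, IsDomSet G D → D.card ≤ γ → h ∈ D := by
    intro D hD hc
    obtain ⟨u, hu, hu3⟩ := exists_deg3 hD (by omega)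
    by_cases e : u = h
    · exact e ▸ hu
    · have := deg_le hM.conn hB hh e
      omega
  have slack : ∀ D, IsDomSet G D → γ ≤ D.card := by
    intro D hD
    by_contra hlt
    push Not at hlt
    have hhD := hmem D hD hlt.le
    obtain ⟨v1, hv1⟩ : (nb G h).Nonempty := by
      rw [← Finset.card_pos]; omega
    rw [mem_nb] at hv1
    refine move hM hac hB hh hv1 (D := insert v1 D) ((Finset.card_insert_le _ _).trans hlt) ?_
    intro v hv
    rw [Finset.mem_insert, not_or] at hv
    obtain ⟨u, hu, huv⟩ := hD v hv.2
    refine ⟨u, Finset.mem_insert_of_mem hu, ?_⟩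
    rw [SimpleGraph.deleteEdges_adj, Set.mem_singleton_iff, Sym2.eq_iff]
    refine ⟨huv, ?_⟩
    rintro (e | e)
    · exact hv.1 e.2
    · exact hv.2 (e.2 ▸ hhD)
  refine ⟨slack, ?_⟩
  obtain ⟨D, hDm, hDmin⟩ := Finset.exists_min_image
    (Finset.univ.filter fun D : Finset V => IsDomSet G D ∧ D.card = γ)
    (fun D => ∑ u ∈ D, G.dist h u)
    ⟨D0, by
      rw [Finset.mem_filter]
      exact ⟨Finset.mem_univ _, hD0, le_antisymm hc0 (slack D0 hD0)⟩⟩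
  rw [Finset.mem_filter] at hDm
  obtain ⟨-, hD, hDc⟩ := hDm
  refine ⟨D, hD, hDc, ?_⟩
  have main : ∀ k q0 q1, G.dist h q0 = k → G.dist h q1 = k + 1 → ¬ Bad G D q0 q1 := by
    intro k
    induction k with
    | zero =>
      intro q0 q1 k1 k2 hbad
      have : h = q0 := (hM.conn.dist_eq_zero_iff).1 k1
      subst this
      exact move hM hac hB hh hbad.1 hDc.le hbad.2.2
    | succ k ih =>
      intro q0 q1 k1 k2 hbad
      have hq0 : q0 ≠ h := by
        rintro rfl
        rw [SimpleGraph.dist_self] at k1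
        omega
      obtain ⟨p, hp1, hp2, hp3⟩ := par hM.conn hB hh _ q0 rfl hq0
      have hpq : q1 ≠ p := by rintro rfl; omega
      have hN : ∀ y, G.Adj q0 y → y = p ∨ y = q1 := by
        cases hp3 with
        | leaf e1 e2 => exact absurd (e2 q1 hbad.1) hpq
        | step e1 e2 e3 e4 e5 =>
          rcases e4 q1 hbad.1 with e | e
          · exact absurd e hpq
          · rw [e]; exact e4
      by_cases hq : q0 ∈ D
      · have hD1 : IsDomSet G (insert p (D.erase q0)) := by
          intro v hv
          rw [Finset.mem_insert, Finset.mem_erase, not_or, not_and] at hv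
          by_cases e0 : v = q0
          · exact ⟨p, Finset.mem_insert_self _ _, e0 ▸ hp1⟩
          obtain ⟨d, hd, hdv⟩ := hbad.2.2 v (hv.2 e0)
          rw [SimpleGraph.deleteEdges_adj] at hdv
          refine ⟨d, Finset.mem_insert_of_mem (Finset.mem_erase.2 ⟨?_, hd⟩), hdv.1⟩
          rintro rfl
          rcases hN v hdv.1 with e | e
          · exact hv.1 e
          · exact hdv.2 (by rw [e]; rfl)
        have hce := Finset.card_erase_add_one hq
        by_cases hpD : p ∈ D
        · have hpe : p ∈ D.erase q0 := Finset.mem_erase.2 ⟨hp1.ne, hpD⟩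
          rw [Finset.insert_eq_of_mem hpe] at hD1
          have := slack _ hD1
          omega
        · have hpe : p ∉ D.erase q0 := fun e => hpD (Finset.mem_of_mem_erase e)
          have i1 := hDmin (insert p (D.erase q0)) (by
            rw [Finset.mem_filter, Finset.card_insert_of_notMem hpe]
            exact ⟨Finset.mem_univ _, hD1, by omega⟩)
          simp only [Finset.sum_insert hpe] at i1
          have i2 := Finset.sum_erase_add D (fun u => G.dist h u) hq
          omega
      · have hq1 : q1 ∈ D := hbad.2.1.resolve_left hq
        have hpD : p ∈ D := by
          obtain ⟨d, hd, hdv⟩ := hbad.2.2 q0 hq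
          rw [SimpleGraph.deleteEdges_adj] at hdv
          rcases hN d hdv.1.symm with e | e
          · exact e ▸ hd
          · exact absurd (by rw [e, Sym2.eq_swap]; rfl) hdv.2
        refine ih p q0 (by omega) (by omega) ⟨hp1, Or.inl hpD, ?_⟩
        intro v hv
        by_cases e0 : v = q0
        · refine ⟨q1, hq1, ?_⟩
          rw [e0, SimpleGraph.deleteEdges_adj, Set.mem_singleton_iff, Sym2.eq_iff]
          refine ⟨hbad.1.symm, ?_⟩
          rintro (e | e)
          · exact hpq e.1
          · exact hp1.ne e.2.symm
        · obtain ⟨d, hd, hdv⟩ := hD v hv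
          refine ⟨d, hd, ?_⟩
          rw [SimpleGraph.deleteEdges_adj, Set.mem_singleton_iff, Sym2.eq_iff]
          refine ⟨hdv, ?_⟩
          rintro (e | e)
          · exact e0 e.2
          · exact hv (e.2 ▸ hpD)
  intro u w hbad
  have ht : G.IsTree := ⟨hM.conn, hac⟩
  have hne := ht.dist_ne_of_adj h hbad.1
  have h1 : G.dist u w = 1 := SimpleGraph.dist_eq_one_iff_adj.2 hbad.1
  have h3 : G.dist h w ≤ G.dist h u + G.dist u w := hM.conn.dist_triangle
  have h4 : G.dist h u ≤ G.dist h w + G.dist w u := hM.conn.dist_triangle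
  rw [G.dist_comm (u := w) (v := u)] at h4
  rcases lt_or_gt_of_ne hne with e | e
  · exact main _ u w rfl (by omega) hbad
  · exact main _ w u rfl (by omega) hbad.symm

theorem core {G : SimpleGraph V} {γ : ℕ} (hM : Mn G γ) {D0 : Finset V} (hD0 : IsDomSet G D0)
    (hc0 : D0.card ≤ γ) :
    (∀ D, IsDomSet G D → γ ≤ D.card) ∧
      ∃ D, IsDomSet G D ∧ D.card = γ ∧ ∀ u w, ¬ Bad G D u w := by
  by_cases h : ∃ a b, Internal G a b
  · obtain ⟨a, b, hab⟩ := h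
    exact caseA hM hD0 hc0 hab
  · refine caseB hM hD0 hc0 fun a b hab => ?_
    by_contra hcon
    rw [not_or] at hcon
    exact h ⟨a, b, hab, hcon.1, hcon.2⟩

theorem domNum_spec (G : SimpleGraph V) : ∃ D : Finset V, IsDomSet G D ∧ D.card = domNum G :=
  Nat.sInf_mem (s := {k | ∃ D : Finset V, IsDomSet G D ∧ D.card = k})
    ⟨_, Finset.univ, fun v hv => absurd (Finset.mem_univ v) hv, rfl⟩

theorem final {G : SimpleGraph V} {γ : ℕ} (hconn : G.Connected) (hγ1 : 2 ≤ γ)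
    (hcard : 3 * γ + 1 ≤ Fintype.card V) (hdom : domNum G = γ)
    (hmin : ∀ H : SimpleGraph V, H.Connected → domNum H = γ → specRad G ≤ specRad H) :
    ∃ D : Finset V, IsDomSet G D ∧ D.card = γ ∧
      (∃ u ∈ D, ∃ v ∈ D, u ≠ v ∧ G.dist u v = 3) ∧
      (∀ u ∈ D, ∀ v ∈ D, u ≠ v → 3 ≤ G.dist u v) := by
  classical
  obtain ⟨D1, hD1, hc1⟩ := domNum_spec G
  rw [hdom] at hc1
  obtain ⟨K, ⟨hK, DK, hDK, hcK⟩, hKmin⟩ := Set.exists_min_image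
    {H : SimpleGraph V | H.Connected ∧ ∃ D : Finset V, IsDomSet H D ∧ D.card ≤ γ} specRad
    (Set.toFinite _) ⟨G, hconn, D1, hD1, hc1.le⟩
  have hMK : Mn K γ := ⟨hK, hcard, hγ1, fun H D k1 k2 k3 => hKmin H ⟨k1, D, k2, k3⟩⟩
  obtain ⟨s1, D2, hD2, hc2, -⟩ := core hMK hDK hcK
  have hKd : domNum K = γ := by
    obtain ⟨D3, hD3, hc3⟩ := domNum_spec K
    apply le_antisymm
    · exact Nat.sInf_le ⟨D2, hD2, hc2⟩
    · rw [← hc3]; exact s1 D3 hD3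
  have hGK := hmin K hK hKd
  have hMG : Mn G γ := ⟨hconn, hcard, hγ1, fun H D k1 k2 k3 => hGK.trans (hKmin H ⟨k1, D, k2, k3⟩)⟩
  obtain ⟨-, D, hD, hc, hbad⟩ := core hMG hD1 hc1.le
  have far : ∀ u ∈ D, ∀ v ∈ D, u ≠ v → 3 ≤ G.dist u v := by
    intro u hu v hv huv
    have nadj : ¬ G.Adj u v := by
      intro ha
      refine hbad u v ⟨ha, Or.inl hu, ?_⟩
      intro w hw
      obtain ⟨d, hd, hdw⟩ := hD w hw
      refine ⟨d, hd, ?_⟩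
      rw [SimpleGraph.deleteEdges_adj, Set.mem_singleton_iff, Sym2.eq_iff]
      refine ⟨hdw, ?_⟩
      rintro (e | e)
      · exact hw (e.2 ▸ hv)
      · exact hw (e.2 ▸ hu)
    by_contra hlt
    have h0 : G.dist u v ≠ 0 := fun e => huv (hconn.dist_eq_zero_iff.1 e)
    have h1 : G.dist u v ≠ 1 := fun e => nadj (SimpleGraph.dist_eq_one_iff_adj.1 e)
    obtain ⟨w, w1, w2⟩ := exists_closer hconn huv.symm
    have huw : G.Adj u w := SimpleGraph.dist_eq_one_iff_adj.1 (by omega)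
    refine hbad u w ⟨huw, Or.inl hu, ?_⟩
    intro t ht
    by_cases htw : t = w
    · refine ⟨v, hv, ?_⟩
      rw [htw, SimpleGraph.deleteEdges_adj, Set.mem_singleton_iff, Sym2.eq_iff]
      refine ⟨w1.symm, ?_⟩
      rintro (e | e)
      · exact huv e.1.symm
      · exact w1.ne e.1.symm
    · obtain ⟨d, hd, hdt⟩ := hD t ht
      refine ⟨d, hd, ?_⟩
      rw [SimpleGraph.deleteEdges_adj, Set.mem_singleton_iff, Sym2.eq_iff]
      refine ⟨hdt, ?_⟩
      rintro (e | e)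
      · exact htw e.2
      · exact ht (e.2 ▸ hu)
  refine ⟨D, hD, hc, ?_, far⟩
  obtain ⟨u, hu, v, hv, huv⟩ := Finset.one_lt_card.1 (by omega : 1 < D.card)
  have key : ∀ k w, G.dist u w = 2 + k → ∃ w2, G.dist u w2 = 2 := by
    intro k
    induction k with
    | zero => intro w hw; exact ⟨w, hw⟩
    | succ k ih =>
      intro w hw
      have hne : w ≠ u := by
        rintro rfl
        rw [SimpleGraph.dist_self] at hw
        omega
      obtain ⟨w', -, k2⟩ := exists_closer hconn hne
      exact ih w' (by omega)
  have h3 := far u hu v hv huv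
  obtain ⟨w2, hw2⟩ := key (G.dist u v - 2) v (by omega)
  have hw2D : w2 ∉ D := by
    intro hm
    have hne : u ≠ w2 := by
      rintro rfl
      rw [SimpleGraph.dist_self] at hw2
      omega
    have := far u hu w2 hm hne
    omega
  obtain ⟨d, hd, hdw⟩ := hD w2 hw2D
  have h1 : G.dist d w2 = 1 := SimpleGraph.dist_eq_one_iff_adj.2 hdw
  have hud : u ≠ d := by
    rintro rfl
    omega
  have h4 : G.dist u d ≤ G.dist u w2 + G.dist w2 d := hconn.dist_triangle
  rw [G.dist_comm (u := w2) (v := d)] at h4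
  have := far u hu d hd hud
  exact ⟨u, hu, d, hd, hud, by omega⟩

end helpers

theorem minimizer_min_distance_eq_three (n γ : ℕ) (hγ1 : 2 ≤ γ) (hγ2 : γ < (n + 2) / 3)
    (G : SimpleGraph (Fin n)) (hconn : G.Connected) (hdom : domNum G = γ)
    (hmin : ∀ H : SimpleGraph (Fin n), H.Connected → domNum H = γ →
      specRad G ≤ specRad H) :
    ∃ D : Finset (Fin n), IsDomSet G D ∧ D.card = γ ∧
      (∃ u ∈ D, ∃ v ∈ D, u ≠ v ∧ G.dist u v = 3) ∧
      (∀ u ∈ D, ∀ v ∈ D, u ≠ v → 3 ≤ G.dist u v) := by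
  exact final hconn hγ1 (by rw [Fintype.card_fin]; omega) hdom hmin
end

section
/- Let n ≥ 2 and let G be a connected simple graph on n vertices with domination number ⌈n/3⌉ whose spectral radius is minimum among all connected simple graphs on n vertices with domination number ⌈n/3⌉. Then G is isomorphic to the path P_n. -/
open SimpleGraph

/-- `S` is connected to the root `u` (cut formulation). -/
def RootConn {V : Type*} (G : SimpleGraph V) (S : Finset V) (u : V) : Prop :=
  ∀ T ⊆ S, T.Nonempty → ∃ a ∈ T, ∃ b, (b = u ∨ b ∈ S) ∧ b ∉ T ∧ G.Adj a b

theorem rootConn_split {V : Type*} [DecidableEq V] (G : SimpleGraph V) (S : Finset V) (u : V)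
    (hu : u ∉ S) (hR : RootConn G S u) (hS : S.Nonempty) :
    ∃ w ∈ S, G.Adj u w ∧ ∃ C ⊆ S, w ∈ C ∧ RootConn G (C.erase w) w ∧ RootConn G C u ∧
      RootConn G (S \ C) u := by
  classical
  obtain ⟨w, hw, b, hb, hbS, hadj⟩ := hR S (Finset.Subset.refl _) hS
  have hbu : b = u := by tauto
  subst hbu
  let F := S.powerset.filter (fun C => w ∈ C ∧ RootConn G (C.erase w) w)
  have hF : F.Nonempty := by
    refine ⟨{w}, ?_⟩
    simp only [F, Finset.mem_filter, Finset.mem_powerset, Finset.singleton_subset_iff,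
      Finset.mem_singleton, true_and]
    refine ⟨hw, ?_⟩
    intro T hT hTn
    obtain ⟨t, ht⟩ := hTn
    have := hT ht
    simp at this
  obtain ⟨C, hC, hmax⟩ := F.exists_max_image Finset.card hF
  simp only [F, Finset.mem_filter, Finset.mem_powerset] at hC
  obtain ⟨hCS, hwC, hCR⟩ := hC
  have hnoedge : ∀ x ∈ S, x ∉ C → ∀ c ∈ C, ¬ G.Adj x c := by
    intro x hxS hxC c hc hxc
    have hmem : insert x C ∈ F := by
      simp only [F, Finset.mem_filter, Finset.mem_powerset]
      refine ⟨Finset.insert_subset hxS hCS, Finset.mem_insert_of_mem hwC, ?_⟩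
      intro T hT hTn
      by_cases hTx : (T.erase x).Nonempty
      · obtain ⟨a, ha, b', hb', hbT, hab⟩ := hCR (T.erase x) (by
          intro t ht
          have h1 := hT (Finset.mem_of_mem_erase ht)
          have h2 := Finset.ne_of_mem_erase ht
          simp only [Finset.mem_erase, Finset.mem_insert] at h1 ⊢
          tauto) hTx
        refine ⟨a, Finset.mem_of_mem_erase ha, b', ?_, ?_, hab⟩
        · simp only [Finset.mem_erase, Finset.mem_insert] at hb' ⊢
          tauto
        · intro hbT'
          apply hbT
          rw [Finset.mem_erase]
          refine ⟨?_, hbT'⟩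
          rintro rfl
          simp only [Finset.mem_erase] at hb'
          rcases hb' with rfl | hb'
          · exact hxC hwC
          · exact hxC hb'.2
      · obtain ⟨t, ht⟩ := hTn
        have hall : ∀ t ∈ T, t = x := by
          intro t ht
          by_contra hne
          exact hTx ⟨t, Finset.mem_erase.2 ⟨hne, ht⟩⟩
        have hxT : x ∈ T := hall t ht ▸ ht
        refine ⟨x, hxT, c, ?_, ?_, hxc⟩
        · simp only [Finset.mem_erase, Finset.mem_insert]
          tauto
        · intro hcT
          exact hxC (hall c hcT ▸ hc)
    have := hmax _ hmem
    rw [Finset.card_insert_of_notMem hxC] at this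
    omega
  refine ⟨w, hw, hadj.symm, C, hCS, hwC, hCR, ?_, ?_⟩
  · intro T hT hTn
    by_cases hwT : w ∈ T
    · exact ⟨w, hwT, b, Or.inl rfl, fun h => hu (hCS (hT h)), hadj⟩
    · obtain ⟨a, ha, b', hb', hbT, hab⟩ := hCR T (by
        intro t ht
        rw [Finset.mem_erase]
        exact ⟨fun h => hwT (h ▸ ht), hT ht⟩) hTn
      refine ⟨a, ha, b', ?_, hbT, hab⟩
      rcases hb' with rfl | hb'
      · exact Or.inr hwC
      · exact Or.inr (Finset.mem_of_mem_erase hb')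
  · intro T hT hTn
    obtain ⟨a, ha, b', hb', hbT, hab⟩ := hR T (fun t ht => (Finset.mem_sdiff.1 (hT ht)).1) hTn
    refine ⟨a, ha, b', ?_, hbT, hab⟩
    rcases hb' with rfl | hb'
    · exact Or.inl rfl
    · right
      rw [Finset.mem_sdiff]
      refine ⟨hb', fun hbC => ?_⟩
      have := Finset.mem_sdiff.1 (hT ha)
      exact hnoedge a this.1 this.2 b' hbC hab

theorem crossing_edge {V : Type*} (G : SimpleGraph V) (hG : G.Connected) (T : Set V) (a b : V)
    (ha : a ∈ T) (hb : b ∉ T) : ∃ x ∈ T, ∃ y, y ∉ T ∧ G.Adj x y := by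
  obtain ⟨p⟩ := hG.preconnected a b
  obtain ⟨d, -, h1, h2⟩ := p.exists_boundary_dart T ha hb
  exact ⟨d.fst, h1, d.snd, h2, d.adj⟩

/-- The key inequality. -/
theorem key_ineq {V : Type*} [DecidableEq V] [Fintype V] (G : SimpleGraph V) [DecidableRel G.Adj]
    (N : ℕ) (lam : ℝ) (f : ℕ → ℝ) (z : V → ℝ)
    (hz : ∀ v, 0 < z v) (hsup : ∀ v, ∑ w ∈ Finset.univ.filter (G.Adj v), z w ≤ lam * z v)
    (f0 : f 0 = 0) (fpos : ∀ k, 1 ≤ k → k ≤ N → 0 < f k)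
    (frec : ∀ k, k + 1 ≤ N → f (k + 1) * (lam - f k) = 1)
    (fsub : ∀ a b, 1 ≤ a → 1 ≤ b → a + b ≤ N → f (a + b) ≤ f a + f b)
    (fsub' : ∀ a b, 1 ≤ a → 1 ≤ b → a + b < N → f (a + b) < f a + f b) :
    ∀ m : ℕ, ∀ S : Finset V, S.card = m → m ≤ N → ∀ u ∉ S, RootConn G S u →
      f m * z u ≤ ∑ w ∈ S.filter (G.Adj u), z w ∧
      (m < N → 2 ≤ (S.filter (G.Adj u)).card → f m * z u < ∑ w ∈ S.filter (G.Adj u), z w) ∧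
      (3 ≤ (S.filter (G.Adj u)).card → f m * z u < ∑ w ∈ S.filter (G.Adj u), z w) := by
  intro m
  induction m using Nat.strong_induction_on with
  | _ m ih =>
  intro S hSm hmN u hu hR
  rcases S.eq_empty_or_nonempty with rfl | hS
  · simp at hSm
    subst hSm
    simp [f0]
  obtain ⟨w, hw, huw, C, hCS, hwC, hCw, hCu, hDu⟩ := rootConn_split G S u hu hR hS
  have hcard : (S \ C).card + C.card = S.card := Finset.card_sdiff_add_card_eq_card hCS
  have hCpos : 0 < C.card := Finset.card_pos.2 ⟨w, hwC⟩
  rcases (S \ C).eq_empty_or_nonempty with hD | hD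
  · -- connected case
    have hCeq : C = S := by
      apply Finset.Subset.antisymm hCS
      rwa [Finset.sdiff_eq_empty_iff_subset] at hD
    subst hCeq
    obtain ⟨k, rfl⟩ : ∃ k, m = k + 1 := ⟨m - 1, by omega⟩
    have hk := (ih k (by omega) (C.erase w) (by rw [Finset.card_erase_of_mem hwC]; omega)
      (by omega) w (Finset.notMem_erase w C) hCw).1
    have h1 : z u + ∑ x ∈ (C.erase w).filter (G.Adj w), z x ≤
        ∑ x ∈ Finset.univ.filter (G.Adj w), z x := by
      rw [← Finset.sum_insert (by simp [hu])]
      apply Finset.sum_le_sum_of_subset_of_nonneg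
      · intro x hx
        simp only [Finset.mem_insert, Finset.mem_filter] at hx
        simp only [Finset.mem_filter, Finset.mem_univ, true_and]
        rcases hx with rfl | hx
        · exact huw.symm
        · exact hx.2
      · intro i _ _
        exact (hz i).le
    have h2 := hsup w
    have h3 := frec k hmN
    have h4 := fpos (k + 1) (by omega) hmN
    have hmain : f (k + 1) * z u ≤ z w := by
      have : z u ≤ (lam - f k) * z w := by linarith
      calc f (k + 1) * z u ≤ f (k + 1) * ((lam - f k) * z w) := by gcongr
        _ = (f (k + 1) * (lam - f k)) * z w := by ring
        _ = z w := by rw [h3, one_mul]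
    have hwf : w ∈ C.filter (G.Adj u) := by simp [hwC, huw]
    have hle : f (k + 1) * z u ≤ ∑ w ∈ C.filter (G.Adj u), z w :=
      hmain.trans (Finset.single_le_sum (f := z) (fun i _ => (hz i).le) hwf)
    have hlt : 2 ≤ (C.filter (G.Adj u)).card → f (k + 1) * z u < ∑ w ∈ C.filter (G.Adj u), z w := by
      intro h
      obtain ⟨w', hw', hne⟩ := Finset.exists_mem_ne (by omega : 1 < (C.filter (G.Adj u)).card) w
      refine hmain.trans_lt ?_
      exact Finset.single_lt_sum hne hwf hw' (hz w') (fun k _ _ => (hz k).le)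
    exact ⟨hle, fun _ h => hlt h, fun h => hlt (by omega)⟩
  · have hDpos : 0 < (S \ C).card := Finset.card_pos.2 hD
    obtain ⟨c1, c2, -⟩ := ih C.card (by omega) C rfl (by omega) u (fun h => hu (hCS h)) hCu
    obtain ⟨d1, d2, -⟩ := ih (S \ C).card (by omega) (S \ C) rfl (by omega) u
      (fun h => hu (Finset.mem_sdiff.1 h).1) hDu
    have hsplit : ∑ w ∈ S.filter (G.Adj u), z w =
        ∑ w ∈ (S \ C).filter (G.Adj u), z w + ∑ w ∈ C.filter (G.Adj u), z w := by
      rw [Finset.sum_filter, Finset.sum_filter, Finset.sum_filter, Finset.sum_sdiff hCS]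
    have hcsplit : (S.filter (G.Adj u)).card =
        ((S \ C).filter (G.Adj u)).card + (C.filter (G.Adj u)).card := by
      rw [Finset.card_filter, Finset.card_filter, Finset.card_filter, Finset.sum_sdiff hCS]
    have hm : m = C.card + (S \ C).card := by omega
    have hzu := hz u
    have e1 : f m * z u ≤ f C.card * z u + f (S \ C).card * z u := by
      rw [← add_mul]
      have := fsub C.card (S \ C).card hCpos hDpos (by omega)
      rw [← hm] at this
      gcongr
    rw [hsplit, hcsplit]
    refine ⟨by linarith, fun h _ => ?_, fun h => ?_⟩
    · have : f m * z u < f C.card * z u + f (S \ C).card * z u := by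
        rw [← add_mul]
        have := fsub' C.card (S \ C).card hCpos hDpos (by omega)
        rw [← hm] at this
        gcongr
      linarith
    · by_cases h' : 2 ≤ (C.filter (G.Adj u)).card
      · have := c2 (by omega) h'
        linarith
      · have := d2 (by omega) (by omega)
        linarith

theorem degree_le_two {V : Type*} [DecidableEq V] [Fintype V] (G : SimpleGraph V)
    [DecidableRel G.Adj] (hG : G.Connected)
    (N : ℕ) (hN : Fintype.card V = N + 1) (lam : ℝ) (f : ℕ → ℝ) (z : V → ℝ)
    (hz : ∀ v, 0 < z v) (hsup : ∀ v, ∑ w ∈ Finset.univ.filter (G.Adj v), z w ≤ lam * z v)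
    (f0 : f 0 = 0) (fpos : ∀ k, 1 ≤ k → k ≤ N → 0 < f k)
    (frec : ∀ k, k + 1 ≤ N → f (k + 1) * (lam - f k) = 1)
    (fsub : ∀ a b, 1 ≤ a → 1 ≤ b → a + b ≤ N → f (a + b) ≤ f a + f b)
    (fsub' : ∀ a b, 1 ≤ a → 1 ≤ b → a + b < N → f (a + b) < f a + f b)
    (flast : f N = lam) (v : V) : (Finset.univ.filter (G.Adj v)).card ≤ 2 := by
  by_contra hcon
  have hfil : (Finset.univ.erase v).filter (G.Adj v) = Finset.univ.filter (G.Adj v) := by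
    ext x
    simp only [Finset.mem_filter, Finset.mem_erase, Finset.mem_univ, and_true, true_and]
    exact ⟨fun h => h.2, fun h => ⟨h.ne', h⟩⟩
  have hroot : RootConn G (Finset.univ.erase v) v := by
    intro T hT hTn
    obtain ⟨t, ht⟩ := hTn
    obtain ⟨x, hx, y, hy, hxy⟩ := crossing_edge G hG (T : Set V) t v ht
      (fun h => by simpa using hT h)
    exact ⟨x, hx, y, by simp [em], hy, hxy⟩
  have := (key_ineq G N lam f z hz hsup f0 fpos frec fsub fsub' N (Finset.univ.erase v)
    (by rw [Finset.card_erase_of_mem (Finset.mem_univ v), Finset.card_univ, hN]; rfl) le_rfl v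
    (Finset.notMem_erase v _) hroot).2.2
  rw [hfil, flast] at this
  exact absurd (hsup v) (not_le.2 (this (by omega)))

theorem exists_degree_le_one {V : Type*} [DecidableEq V] [Fintype V] [Nonempty V]
    (G : SimpleGraph V)
    [DecidableRel G.Adj] (lam : ℝ) (hlam : lam < 2) (z : V → ℝ)
    (hz : ∀ v, 0 < z v) (hsup : ∀ v, ∑ w ∈ Finset.univ.filter (G.Adj v), z w ≤ lam * z v) :
    ∃ v, (Finset.univ.filter (G.Adj v)).card ≤ 1 := by
  by_contra! hcon
  have h1 : ∑ v, ∑ w ∈ Finset.univ.filter (G.Adj v), z w ≤ ∑ v, lam * z v :=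
    Finset.sum_le_sum fun v _ => hsup v
  have h2 : ∑ v, ∑ w ∈ Finset.univ.filter (G.Adj v), z w =
      ∑ w, ((Finset.univ.filter (G.Adj w)).card : ℝ) * z w := by
    simp_rw [Finset.sum_filter]
    rw [Finset.sum_comm]
    refine Finset.sum_congr rfl fun w _ => ?_
    rw [← Finset.sum_filter, Finset.sum_const, nsmul_eq_mul]
    simp_rw [G.adj_comm]
  have h3 : ∑ w, 2 * z w ≤ ∑ w, ((Finset.univ.filter (G.Adj w)).card : ℝ) * z w := by
    refine Finset.sum_le_sum fun w _ => ?_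
    have : (2 : ℝ) ≤ ((Finset.univ.filter (G.Adj w)).card : ℝ) := by exact_mod_cast hcon w
    have := hz w
    gcongr
  have h4 : 0 < ∑ v, z v := Finset.sum_pos (fun v _ => hz v) Finset.univ_nonempty
  rw [← Finset.mul_sum] at h1 h3
  nlinarith

theorem dist_pred {V : Type*} (G : SimpleGraph V) (hG : G.Connected) (v x : V) (k : ℕ)
    (h : G.dist v x = k + 1) : ∃ y, G.Adj y x ∧ G.dist v y = k := by
  obtain ⟨p, hp⟩ := hG.exists_walk_length_eq_dist x v
  rw [SimpleGraph.dist_comm, h] at hp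
  cases p with
  | nil => simp at hp
  | cons hadj q =>
    rename_i y
    refine ⟨y, hadj.symm, ?_⟩
    simp at hp
    have h1 : G.dist y v ≤ q.length := SimpleGraph.dist_le q
    rw [SimpleGraph.dist_comm] at h1
    have h2 := hG.dist_triangle (u := v) (v := y) (w := x)
    have h3 : G.dist y x = 1 := SimpleGraph.dist_eq_one_iff_adj.2 hadj.symm
    omega

theorem iso_path {n : ℕ} (G : SimpleGraph (Fin n)) [DecidableRel G.Adj] (hG : G.Connected)
    (hdeg : ∀ v, (Finset.univ.filter (G.Adj v)).card ≤ 2) (v : Fin n)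
    (hv : (Finset.univ.filter (G.Adj v)).card ≤ 1) : Nonempty (G ≃g SimpleGraph.pathGraph n) := by
  have hinj : ∀ k, ∀ x y, G.dist v x = k → G.dist v y = k → x = y := by
    intro k
    induction k with
    | zero =>
      intro x y hx hy
      rw [hG.dist_eq_zero_iff] at hx hy
      rw [← hx, ← hy]
    | succ k ih =>
      intro x y hx hy
      obtain ⟨x', hx', hxk⟩ := dist_pred G hG v x k hx
      obtain ⟨y', hy', hyk⟩ := dist_pred G hG v y k hy
      obtain rfl := ih x' y' hxk hyk
      by_contra hne
      cases k with
      | zero =>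
        rw [hG.dist_eq_zero_iff] at hxk
        subst hxk
        have : ({x, y} : Finset (Fin n)) ⊆ Finset.univ.filter (G.Adj v) := by
          intro t ht
          simp at ht ⊢
          rcases ht with rfl | rfl <;> assumption
        have := Finset.card_le_card this
        rw [Finset.card_pair hne] at this
        omega
      | succ j =>
        obtain ⟨p, hp, hpj⟩ := dist_pred G hG v x' j hxk
        have : ({p, x, y} : Finset (Fin n)) ⊆ Finset.univ.filter (G.Adj x') := by
          intro t ht
          simp at ht ⊢
          rcases ht with rfl | rfl | rfl
          · exact hp.symm
          · assumption
          · assumption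
        have := Finset.card_le_card this
        have h1 : p ≠ x := by rintro rfl; omega
        have h2 : p ≠ y := by rintro rfl; omega
        rw [Finset.card_eq_three.2 ⟨p, x, y, h1, h2, hne, rfl⟩] at this
        have := hdeg x'
        omega
  have hdown : ∀ k, ∀ x, G.dist v x = k → ∀ j ≤ k, ∃ y, G.dist v y = j := by
    intro k
    induction k with
    | zero => intro x hx j hj; exact ⟨x, by omega⟩
    | succ k ih =>
      intro x hx j hj
      rcases Nat.lt_or_ge k j with h | h
      · exact ⟨x, by omega⟩
      · obtain ⟨y, -, hy⟩ := dist_pred G hG v x k hx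
        exact ih y hy j h
  have hlt : ∀ x, G.dist v x < n := by
    intro x
    have : Finset.range (G.dist v x + 1) ⊆ Finset.univ.image (G.dist v) := by
      intro j hj
      rw [Finset.mem_range] at hj
      obtain ⟨y, hy⟩ := hdown _ x rfl j (by omega)
      simp only [Finset.mem_image, Finset.mem_univ, true_and]
      exact ⟨y, hy⟩
    have h1 := Finset.card_le_card this
    have h2 := Finset.card_image_le (s := (Finset.univ : Finset (Fin n))) (f := G.dist v)
    simp at h1 h2
    omega
  let g : Fin n → Fin n := fun x => ⟨G.dist v x, hlt x⟩
  have hg : Function.Injective g := by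
    intro x y hxy
    exact hinj _ x y rfl (by simpa [g] using hxy.symm)
  refine ⟨⟨Equiv.ofBijective g (Finite.injective_iff_bijective.1 hg), ?_⟩⟩
  intro a b
  rw [SimpleGraph.pathGraph_adj]
  simp only [Equiv.ofBijective_apply, g]
  constructor
  · rintro (h | h)
    · obtain ⟨y, hy, hyd⟩ := dist_pred G hG v b _ h.symm
      rwa [hinj _ y a hyd rfl] at hy
    · obtain ⟨y, hy, hyd⟩ := dist_pred G hG v a _ h.symm
      rw [hinj _ y b hyd rfl] at hy
      exact hy.symm
  · intro hab
    have hne : G.dist v a ≠ G.dist v b := fun h => hab.ne (hinj _ a b h rfl)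
    have h3 : G.dist a b = 1 := SimpleGraph.dist_eq_one_iff_adj.2 hab
    have h4 : G.dist b a = 1 := SimpleGraph.dist_eq_one_iff_adj.2 hab.symm
    have h1 := hG.dist_triangle (u := v) (v := a) (w := b)
    have h2 := hG.dist_triangle (u := v) (v := b) (w := a)
    omega

theorem domNum_path (n : ℕ) (hn : 2 ≤ n) : domNum (SimpleGraph.pathGraph n) = (n + 2) / 3 := by
  unfold domNum
  let D : Finset (Fin n) := (Finset.range ((n + 2) / 3)).image
    (fun i => ⟨min (3 * i + 1) (n - 1), by omega⟩)
  have hD : IsDomSet (SimpleGraph.pathGraph n) D := by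
    intro v hv
    have hmem : (⟨min (3 * (v.val / 3) + 1) (n - 1), by omega⟩ : Fin n) ∈ D := by
      simp only [D, Finset.mem_image, Finset.mem_range]
      exact ⟨v.val / 3, by omega, rfl⟩
    refine ⟨_, hmem, ?_⟩
    rw [SimpleGraph.pathGraph_adj]
    have hne : v.val ≠ min (3 * (v.val / 3) + 1) (n - 1) := by
      intro h
      apply hv
      convert hmem
    have := v.isLt
    simp only
    omega
  have hDc : D.card ≤ (n + 2) / 3 := by
    simpa using Finset.card_image_le (s := Finset.range ((n + 2) / 3))
      (f := fun i => (⟨min (3 * i + 1) (n - 1), by omega⟩ : Fin n))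
  have hmem0 : D.card ∈ {k | ∃ D : Finset (Fin n), IsDomSet (SimpleGraph.pathGraph n) D ∧
      D.card = k} := by
    exact ⟨D, hD, rfl⟩
  have hne0 : {k | ∃ D : Finset (Fin n), IsDomSet (SimpleGraph.pathGraph n) D ∧
      D.card = k}.Nonempty := ⟨D.card, hmem0⟩
  apply le_antisymm
  · exact (Nat.sInf_le hmem0).trans hDc
  · apply le_csInf hne0
    rintro k ⟨E, hE, rfl⟩
    have hsub : Finset.range n ⊆ E.biUnion (fun u => {u.val - 1, u.val, u.val + 1}) := by
      intro i hi
      rw [Finset.mem_range] at hi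
      rw [Finset.mem_biUnion]
      by_cases h : (⟨i, hi⟩ : Fin n) ∈ E
      · exact ⟨_, h, by simp⟩
      · obtain ⟨u, hu, hadj⟩ := hE _ h
        refine ⟨u, hu, ?_⟩
        rw [SimpleGraph.pathGraph_adj] at hadj
        simp only [Finset.mem_insert, Finset.mem_singleton]
        simp only at hadj
        omega
    have h1 := Finset.card_le_card hsub
    have h2 := Finset.card_biUnion_le_card_mul E
      (fun u : Fin n => ({u.val - 1, u.val, u.val + 1} : Finset ℕ)) 3 (fun u _ => Finset.card_le_three)
    simp only [Finset.card_range] at h1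
    omega

theorem mem_spec_iff {n : ℕ} (M : Matrix (Fin n) (Fin n) ℝ) (μ : ℝ) (h : μ ∈ spectrum ℝ M) :
    ∃ y : Fin n → ℝ, y ≠ 0 ∧ M.mulVec y = μ • y := by
  rw [← Matrix.spectrum_toLin', ← Module.End.hasEigenvalue_iff_mem_spectrum] at h
  obtain ⟨y, hy⟩ := h.exists_hasEigenvector
  refine ⟨y, hy.2, ?_⟩
  simpa using hy.apply_eq_smul

theorem adjMat_mulVec_s7 {n : ℕ} (G : SimpleGraph (Fin n)) [DecidableRel G.Adj] (y : Fin n → ℝ)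
    (i : Fin n) : (adjMat G).mulVec y i = ∑ j ∈ Finset.univ.filter (G.Adj i), y j := by
  simp only [adjMat, Matrix.mulVec, dotProduct, Matrix.of_apply, Finset.sum_filter]
  refine Finset.sum_congr rfl fun j _ => ?_
  by_cases h : G.Adj i j <;> simp [h]

theorem specRad_le {n : ℕ} (G : SimpleGraph (Fin n)) [DecidableRel G.Adj] (lam : ℝ)
    (hlam : 0 ≤ lam) (x : Fin n → ℝ) (hx : ∀ i, 0 < x i)
    (hsup : ∀ i, ∑ j ∈ Finset.univ.filter (G.Adj i), x j ≤ lam * x i) : specRad G ≤ lam := by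
  apply Real.sSup_le _ hlam
  intro μ hμ
  obtain ⟨y, hy0, hy⟩ := mem_spec_iff _ _ hμ
  obtain ⟨k, hk⟩ := Function.ne_iff.1 hy0
  obtain ⟨i, -, hi⟩ := Finset.exists_max_image Finset.univ (fun i => |y i| / x i) ⟨k, Finset.mem_univ k⟩
  set t := |y i| / x i with ht
  have hyi : |y i| = t * x i := by rw [ht]; field_simp [(hx i).ne']
  have hle : ∀ j, |y j| ≤ t * x j := fun j => (div_le_iff₀ (hx j)).1 (hi j (Finset.mem_univ j))
  have htpos : 0 < t := lt_of_lt_of_le (div_pos (abs_pos.2 hk) (hx k)) (hi k (Finset.mem_univ k))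
  have h1 : ∑ j ∈ Finset.univ.filter (G.Adj i), y j = μ * y i := by
    rw [← adjMat_mulVec_s7, hy]; simp
  have h2 : |μ| * |y i| ≤ t * (lam * x i) := by
    rw [← abs_mul, ← h1]
    calc |∑ j ∈ Finset.univ.filter (G.Adj i), y j|
        ≤ ∑ j ∈ Finset.univ.filter (G.Adj i), |y j| := Finset.abs_sum_le_sum_abs _ _
      _ ≤ ∑ j ∈ Finset.univ.filter (G.Adj i), t * x j := Finset.sum_le_sum fun j _ => hle j
      _ = t * ∑ j ∈ Finset.univ.filter (G.Adj i), x j := by rw [Finset.mul_sum]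
      _ ≤ t * (lam * x i) := by have := hsup i; gcongr
  rw [hyi] at h2
  have h3 : 0 < t * x i := mul_pos htpos (hx i)
  have h4 : |μ| * (t * x i) ≤ lam * (t * x i) := by linarith
  exact (le_abs_self μ).trans (le_of_mul_le_mul_right h4 h3)

theorem perron_s7 {n : ℕ} (hn : 2 ≤ n) (G : SimpleGraph (Fin n)) [DecidableRel G.Adj]
    (hG : G.Connected) : ∃ z : Fin n → ℝ, (∀ i, 0 < z i) ∧
      ∀ i, ∑ j ∈ Finset.univ.filter (G.Adj i), z j = specRad G * z i := by
  have hherm : (adjMat G).IsHermitian := by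
    ext i j
    simp only [adjMat, Matrix.conjTranspose_apply, Matrix.of_apply, G.adj_comm]
    simp
  have hfin : (spectrum ℝ (adjMat G)).Finite := Matrix.finite_spectrum _
  have hne : (spectrum ℝ (adjMat G)).Nonempty :=
    ⟨_, hherm.eigenvalues_mem_spectrum_real ⟨0, by omega⟩⟩
  have hmem : specRad G ∈ spectrum ℝ (adjMat G) := hne.csSup_mem hfin
  set r := specRad G with hr
  have hpsd : (algebraMap ℝ (Matrix (Fin n) (Fin n) ℝ) r - adjMat G).PosSemidef := by
    rw [Matrix.posSemidef_iff_isHermitian_and_spectrum_nonneg]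
    constructor
    · apply Matrix.IsHermitian.sub _ hherm
      rw [Matrix.algebraMap_eq_diagonal]
      exact Matrix.isHermitian_diagonal _
    · rw [← spectrum.singleton_sub_eq]
      rintro a ha
      rw [Set.singleton_sub] at ha
      obtain ⟨b, hb, rfl⟩ := ha
      have : b ≤ r := le_csSup hfin.bddAbove hb
      simpa using this
  obtain ⟨y, hy0, hy⟩ := mem_spec_iff _ _ hmem
  have hmv : ∀ x : Fin n → ℝ, (algebraMap ℝ (Matrix (Fin n) (Fin n) ℝ) r - adjMat G).mulVec x =
      r • x - (adjMat G).mulVec x := by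
    intro x
    rw [Matrix.sub_mulVec, Algebra.algebraMap_eq_smul_one, Matrix.smul_mulVec, Matrix.one_mulVec]
  let z : Fin n → ℝ := fun i => |y i|
  have hz0 : ∀ i, 0 ≤ z i := fun i => abs_nonneg _
  have hq : star z ⬝ᵥ (algebraMap ℝ (Matrix (Fin n) (Fin n) ℝ) r - adjMat G).mulVec z = 0 := by
    apply le_antisymm _ (hpsd.dotProduct_mulVec_nonneg z)
    have h0 : ∑ i, y i * (r * y i - ∑ j ∈ Finset.univ.filter (G.Adj i), y j) = 0 := by
      apply Finset.sum_eq_zero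
      intro i _
      have := congrFun hy i
      rw [adjMat_mulVec_s7] at this
      rw [this]
      simp
    rw [hmv]
    simp only [dotProduct, Pi.sub_apply, Pi.smul_apply, smul_eq_mul, adjMat_mulVec_s7, Pi.star_apply,
      star_trivial]
    rw [← h0]
    apply Finset.sum_le_sum
    intro i _
    rw [mul_sub, mul_sub, Finset.mul_sum, Finset.mul_sum]
    have e1 : z i * (r * z i) = y i * (r * y i) := by
      have : z i * z i = y i * y i := abs_mul_abs_self (y i)
      linear_combination r * this
    rw [e1]
    apply sub_le_sub_left
    apply Finset.sum_le_sum
    intro j _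
    simp only [z]
    rw [← abs_mul]
    exact le_abs_self _
  rw [hpsd.dotProduct_mulVec_zero_iff, hmv] at hq
  have heq : ∀ i, ∑ j ∈ Finset.univ.filter (G.Adj i), z j = r * z i := by
    intro i
    have := congrFun hq i
    simp only [Pi.sub_apply, Pi.smul_apply, smul_eq_mul, adjMat_mulVec_s7, Pi.zero_apply] at this
    linarith
  refine ⟨z, ?_, heq⟩
  by_contra! hcon
  obtain ⟨a, ha⟩ := hcon
  obtain ⟨k, hk⟩ := Function.ne_iff.1 hy0
  have hzk : 0 < z k := abs_pos.2 hk
  obtain ⟨p, hp, q, hq', hpq⟩ := crossing_edge G hG {i | z i ≤ 0} a k ha (by simpa using hzk)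
  have h1 := heq p
  have hp0 : z p = 0 := le_antisymm hp (hz0 p)
  have h2 : z q ≤ ∑ j ∈ Finset.univ.filter (G.Adj p), z j :=
    Finset.single_le_sum (f := z) (fun i _ => hz0 i) (by simpa using hpq)
  rw [h1, hp0, mul_zero] at h2
  exact hq' h2

theorem sin_add_id (t : ℝ) (a b : ℕ) :
    Real.sin ((a + 1 : ℕ) * t) * Real.sin ((b + 1 : ℕ) * t) - Real.sin (a * t) * Real.sin (b * t) =
      Real.sin t * Real.sin ((a + b + 1 : ℕ) * t) := by
  have h1 : ((a + 1 : ℕ) : ℝ) * t = a * t + t := by push_cast; ring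
  have h2 : ((b + 1 : ℕ) : ℝ) * t = b * t + t := by push_cast; ring
  have h3 : ((a + b + 1 : ℕ) : ℝ) * t = a * t + b * t + t := by push_cast; ring
  rw [h1, h2, h3]
  simp only [Real.sin_add, Real.cos_add]
  have := Real.sin_sq_add_cos_sq t
  linear_combination (Real.sin (a * t) * Real.sin (b * t)) * this

theorem sin_rec (t : ℝ) (a : ℕ) :
    Real.sin ((a + 2 : ℕ) * t) = 2 * Real.cos t * Real.sin ((a + 1 : ℕ) * t) - Real.sin (a * t) := by
  have h1 : ((a + 1 : ℕ) : ℝ) * t = a * t + t := by push_cast; ring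
  have h2 : ((a + 2 : ℕ) : ℝ) * t = a * t + t + t := by push_cast; ring
  rw [h1, h2]
  simp only [Real.sin_add, Real.cos_add]
  have := Real.sin_sq_add_cos_sq t
  linear_combination (- Real.sin (a * t)) * this

theorem sub_ineq (p P q Q r R c s1 X : ℝ) (hP : 0 < P) (hQ : 0 < Q)
    (hR : 0 < R) (h1 : 0 < s1) (e1 : P * Q - p * q = s1 * R)
    (e2 : P * q + p * Q - 2 * c * p * q = s1 * r) (e3 : 2 * c * P * Q - p * Q - P * q = s1 * X) :
    p / P + q / Q - r / R = p * q * X / (P * Q * R) := by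
  have hs : s1 ≠ 0 := h1.ne'
  rw [div_add_div _ _ hP.ne' hQ.ne', div_sub_div _ _ (mul_pos hP hQ).ne' hR.ne']
  congr 1
  apply mul_left_cancel₀ hs
  linear_combination (-(p * Q + P * q)) * e1 + P * Q * e2 + p * q * e3

theorem main_path (n : ℕ) (hn : 2 ≤ n) (G : SimpleGraph (Fin n)) (hconn : G.Connected)
    (hle : specRad G ≤ specRad (SimpleGraph.pathGraph n)) :
    Nonempty (G ≃g SimpleGraph.pathGraph n) := by
  classical
  set t : ℝ := Real.pi / (n + 1) with ht
  have hn1 : (0 : ℝ) < n + 1 := by positivity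
  have htn : (n + 1 : ℝ) * t = Real.pi := by rw [ht]; field_simp
  have ht0 : 0 < t := div_pos Real.pi_pos hn1
  have htpi : t ≤ Real.pi / 3 := by
    rw [ht]
    have : (2 : ℝ) ≤ n := by exact_mod_cast hn
    have := Real.pi_pos
    gcongr
    linarith
  have hpi := Real.pi_pos
  have hst : 0 < Real.sin t := Real.sin_pos_of_pos_of_lt_pi ht0 (by linarith)
  have hct : 0 < Real.cos t := Real.cos_pos_of_mem_Ioo ⟨by linarith, by linarith⟩
  have hct1 : Real.cos t < 1 := by
    nlinarith [Real.sin_sq_add_cos_sq t]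
  set s : ℕ → ℝ := fun k => Real.sin (k * t) with hs
  have s0 : s 0 = 0 := by simp [hs]
  have s1 : s 1 = Real.sin t := by simp [hs]
  have spos : ∀ k, 1 ≤ k → k ≤ n → 0 < s k := by
    intro k h1 h2
    have h1' : (1 : ℝ) ≤ k := by exact_mod_cast h1
    have h2' : (k : ℝ) ≤ n := by exact_mod_cast h2
    apply Real.sin_pos_of_pos_of_lt_pi
    · positivity
    · nlinarith
  have slast : s (n + 1) = 0 := by
    simp only [hs]
    push_cast
    rw [htn, Real.sin_pi]
  have snn : ∀ k, k ≤ n + 1 → 0 ≤ s k := by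
    intro k hk
    rcases Nat.eq_zero_or_pos k with rfl | h
    · exact s0.ge
    · rcases Nat.lt_or_ge n k with h' | h'
      · rw [show k = n + 1 by omega, slast]
      · exact (spos k h h').le
  have sadd : ∀ a b, s (a + 1) * s (b + 1) - s a * s b = Real.sin t * s (a + b + 1) :=
    fun a b => sin_add_id t a b
  have srec : ∀ a, s (a + 2) = 2 * Real.cos t * s (a + 1) - s a := fun a => sin_rec t a
  -- upper bound for the path
  have hpath : specRad (SimpleGraph.pathGraph n) ≤ 2 * Real.cos t := by
    apply specRad_le _ _ (by positivity) (fun i => s (i.val + 1))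
    · intro i
      exact spos _ (by omega) (by omega)
    · intro i
      have hi := i.isLt
      rw [Finset.sum_filter]
      have h1 : ∀ j : Fin n, (if (SimpleGraph.pathGraph n).Adj i j then s (j.val + 1) else 0) =
          (if j.val = i.val + 1 then s (i.val + 2) else 0) +
          (if j.val + 1 = i.val then s i.val else 0) := by
        intro j
        simp only [SimpleGraph.pathGraph_adj]
        by_cases c1 : j.val = i.val + 1
        · rw [if_pos (Or.inl c1.symm), if_pos c1, if_neg (by omega), c1, add_zero]
        · by_cases c2 : j.val + 1 = i.val
          · rw [if_pos (Or.inr c2), if_neg c1, if_pos c2, c2, zero_add]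
          · rw [if_neg (by omega), if_neg c1, if_neg c2, add_zero]
      have h2 : ∀ (P : Fin n → Prop) [DecidablePred P] (c : ℝ), 0 ≤ c →
          (∀ x y, P x → P y → x = y) → ∑ j, (if P j then c else 0) ≤ c := by
        intro P _ c hc hP
        rw [← Finset.sum_filter, Finset.sum_const, nsmul_eq_mul]
        have : (Finset.univ.filter P).card ≤ 1 := by
          rw [Finset.card_le_one]
          intro a ha b hb
          exact hP a b (by simpa using ha) (by simpa using hb)
        have : ((Finset.univ.filter P).card : ℝ) ≤ 1 := by exact_mod_cast this
        nlinarith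
      rw [Finset.sum_congr rfl (fun j _ => h1 j), Finset.sum_add_distrib]
      have h3 := h2 (fun j => j.val = i.val + 1) (s (i.val + 2)) (snn _ (by omega))
        (fun x y hx hy => Fin.ext (by omega))
      have h4 := h2 (fun j => j.val + 1 = i.val) (s i.val) (snn _ (by omega))
        (fun x y hx hy => Fin.ext (by omega))
      have h5 := srec i.val
      linarith
  obtain ⟨z, hz, hzeq⟩ := perron_s7 hn G hconn
  have hsup : ∀ v, ∑ w ∈ Finset.univ.filter (G.Adj v), z w ≤ 2 * Real.cos t * z v := by
    intro v
    rw [hzeq]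
    have := hz v
    have := hle.trans hpath
    gcongr
  obtain ⟨N, rfl⟩ : ∃ N, n = N + 1 := ⟨n - 1, by omega⟩
  have fsubeq : ∀ a b, 1 ≤ a → 1 ≤ b → a + b ≤ N → s a / s (a + 1) + s b / s (b + 1) -
      s (a + b) / s (a + b + 1) =
      s a * s b * s (a + b + 2) / (s (a + 1) * s (b + 1) * s (a + b + 1)) := by
    intro a b ha hb hab
    apply sub_ineq _ _ _ _ _ _ (Real.cos t) (Real.sin t) _ (spos _ (by omega) (by omega))
      (spos _ (by omega) (by omega)) (spos _ (by omega) (by omega)) hst (sadd a b)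
    · obtain ⟨c, rfl⟩ : ∃ c, b = c + 1 := ⟨b - 1, by omega⟩
      have h1 := sadd a c
      have h2 := srec c
      rw [← add_assoc, ← h1]
      linear_combination s a * h2
    · have h1 := sadd a (b + 1)
      have h2 := srec b
      rw [show a + b + 2 = a + (b + 1) + 1 by ring, ← h1]
      linear_combination (-s (a + 1)) * h2
  have hdeg := degree_le_two G hconn N (by simp) (2 * Real.cos t) (fun k => s k / s (k + 1)) z hz hsup
    (by simp [s0]) (fun k h1 h2 => div_pos (spos _ h1 (by omega)) (spos _ (by omega) (by omega)))
    (by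
      intro k hk
      have h1 := spos (k + 1) (by omega) (by omega)
      have h2 := spos (k + 2) (by omega) (by omega)
      have h3 := srec k
      show s (k + 1) / s (k + 2) * (2 * Real.cos t - s k / s (k + 1)) = 1
      field_simp
      linarith)
    (by
      intro a b ha hb hab
      have h1 := fsubeq a b ha hb hab
      have h2 : 0 ≤ s a * s b * s (a + b + 2) / (s (a + 1) * s (b + 1) * s (a + b + 1)) := by
        have := spos a (by omega) (by omega)
        have := spos b (by omega) (by omega)
        have := spos (a + 1) (by omega) (by omega)
        have := spos (b + 1) (by omega) (by omega)
        have := spos (a + b + 1) (by omega) (by omega)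
        have := snn (a + b + 2) (by omega)
        positivity
      show s (a + b) / s (a + b + 1) ≤ s a / s (a + 1) + s b / s (b + 1)
      linarith)
    (by
      intro a b ha hb hab
      have h1 := fsubeq a b ha hb hab.le
      have h2 : 0 < s a * s b * s (a + b + 2) / (s (a + 1) * s (b + 1) * s (a + b + 1)) := by
        have := spos a (by omega) (by omega)
        have := spos b (by omega) (by omega)
        have := spos (a + 1) (by omega) (by omega)
        have := spos (b + 1) (by omega) (by omega)
        have := spos (a + b + 1) (by omega) (by omega)
        have := spos (a + b + 2) (by omega) (by omega)
        positivity
      show s (a + b) / s (a + b + 1) < s a / s (a + 1) + s b / s (b + 1)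
      linarith)
    (by
      have h1 := srec N
      have h2 := spos (N + 1) (by omega) (by omega)
      have h3 : s (N + 2) = 0 := slast
      show s N / s (N + 1) = 2 * Real.cos t
      field_simp
      linarith)
  obtain ⟨v, hv⟩ := exists_degree_le_one G (2 * Real.cos t) (by linarith) z hz hsup
  exact iso_path G hconn hdeg v hv

theorem minimizer_domNum_ceil_third_is_path (n : ℕ) (hn : 2 ≤ n)
    (G : SimpleGraph (Fin n)) (hconn : G.Connected)
    (hdom : domNum G = (n + 2) / 3)
    (hmin : ∀ H : SimpleGraph (Fin n), H.Connected → domNum H = (n + 2) / 3 →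
      specRad G ≤ specRad H) :
    Nonempty (G ≃g SimpleGraph.pathGraph n) := by
  refine main_path n hn G hconn (hmin _ ?_ (domNum_path n hn))
  obtain ⟨N, rfl⟩ : ∃ N, n = N + 1 := ⟨n - 1, by omega⟩
  exact SimpleGraph.pathGraph_connected N
end
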